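/- arXiv:2105.01449 — 2 statements merged into one kernel-verified Lean document; each statement's English description precedes it below -/
import Mathlib

section
/- (Hall, 1971) The portion M ∩ [√5, √10] of the Markov spectrum has Hausdorff dimension at most 0.93; in particular, M ∩ [√5, √10] has Lebesgue measure zero. -/
open scoped ENNReal

/-- The best constant of Diophantine approximation of the binary quadratic form
`h(x,y) = a x² + b x y + c y²`, namely `m(h) = sup_{(p,q) ≠ (0,0)} √Δ(h) / |h(p,q)| ∈ (0, ∞]`. -/
noncomputable def markovVal (a b c : ℝ) : ℝ≥0∞ :=
  ⨆ (pq : ℤ × ℤ) (_ : pq ≠ (0, 0)),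
    ENNReal.ofReal (Real.sqrt (b ^ 2 - 4 * a * c)) /
      ENNReal.ofReal |a * (pq.1 : ℝ) ^ 2 + b * pq.1 * pq.2 + c * (pq.2 : ℝ) ^ 2|

/-- The Markov spectrum: the set of finite values `m(h)` over real indefinite binary
quadratic forms `h` with positive discriminant. -/
def MarkovSpectrum : Set ℝ :=
  {t | ∃ a b c : ℝ, 0 < b ^ 2 - 4 * a * c ∧ markovVal a b c ≠ ⊤ ∧ (markovVal a b c).toReal = t}

theorem exists_finset_cover_of_le {S : Set ℝ} (hS : ∀ x ∈ S, 0 ≤ x ∧ x ≤ 1) {K Q p p' q q' : ℝ}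
    (hK : 21 ≤ K) (hQ : 1 ≤ Q) (hq' : 0 ≤ q') (hqq' : q' ≤ q) (hq : Q ≤ q) (hqQ : q ≤ 7 * Q)
    (hdet : |p * q' - p' * q| = 1) :
    ∃ F : Finset ℝ, (F.card : ℝ) ≤ K * (Q / (2 * q + q')) ^ (9 / 10 : ℝ) ∧
      ∀ x ∈ S, ∃ z ∈ F, |(p + p' * x) / (q + q' * x) - z| ≤ 1 / Q ^ 2 := by
  refine ⟨{p / q}, ?_, fun x hx => ⟨p / q, by simp, ?_⟩⟩
  · have h1 : (1 / 21 : ℝ) ≤ Q / (2 * q + q') := by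
      rw [div_le_div_iff₀ (by norm_num) (by linarith)]; linarith
    have h2 : Q / (2 * q + q') ≤ 1 := by
      rw [div_le_one (by linarith)]; linarith
    have h3 : (Q / (2 * q + q')) ^ (1 : ℝ) ≤ (Q / (2 * q + q')) ^ (9 / 10 : ℝ) :=
      Real.rpow_le_rpow_of_exponent_ge (by linarith) h2 (by norm_num)
    rw [Real.rpow_one] at h3
    simp only [Finset.card_singleton, Nat.cast_one]
    nlinarith
  · obtain ⟨hx0, hx1⟩ := hS x hx
    have hq0 : 0 < q := by linarith
    have hqx : q ≤ q + q' * x := by nlinarith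
    have hqx0 : 0 < q + q' * x := by linarith
    have e : (p + p' * x) / (q + q' * x) - p / q =
        -(p * q' - p' * q) * x / ((q + q' * x) * q) := by
      field_simp; ring
    rw [e, abs_div, abs_mul, abs_neg, hdet, one_mul, abs_of_nonneg hx0,
      abs_of_pos (mul_pos hqx0 hq0)]
    exact div_le_div₀ zero_le_one hx1 (by positivity) (by nlinarith)

theorem div_rpow_le_of_ratio {Q l l' r c : ℝ} (hQ : 0 ≤ Q) (hl : 0 < l) (hl' : 0 < l')
    (hr : 0 ≤ r) (h : l ≤ r * l') (hc : 0 ≤ c) (hrc : r ^ 9 ≤ c ^ 10) :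
    (Q / l') ^ (9 / 10 : ℝ) ≤ c * (Q / l) ^ (9 / 10 : ℝ) := by
  have h1 : Q / l' ≤ r * (Q / l) := by
    rw [← mul_div_assoc, div_le_div_iff₀ hl' hl]
    nlinarith
  have h2 : r ^ (9 / 10 : ℝ) ≤ c := by
    have : r ^ (9 / 10 : ℝ) = (r ^ 9) ^ (1 / 10 : ℝ) := by
      rw [← Real.rpow_natCast, ← Real.rpow_mul hr]; norm_num
    rw [this]
    calc _ ≤ (c ^ 10) ^ (1 / 10 : ℝ) := by gcongr
      _ = c := by rw [← Real.rpow_natCast, ← Real.rpow_mul hc]; norm_num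
  calc _ ≤ (r * (Q / l)) ^ (9 / 10 : ℝ) := by gcongr
    _ = r ^ (9 / 10 : ℝ) * (Q / l) ^ (9 / 10 : ℝ) := Real.mul_rpow hr (by positivity)
    _ ≤ _ := by gcongr

/-- Covering bound for the images of two sets of continued fraction tails under Möbius maps. -/
theorem exists_finset_cover {A C : Set ℝ}
    (hA : ∀ x ∈ A, 0 ≤ x ∧ x ≤ 1) (hC : ∀ x ∈ C, 0 ≤ x ∧ x ≤ 1)
    (hAs : ∀ x ∈ A, (∃ y ∈ A, x = 1 / (1 + y)) ∨ ∃ y ∈ C, x = 1 / (2 + 1 / (2 + y)))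
    (hCs : ∀ x ∈ C, (∃ y ∈ A, x = 1 / (1 + y)) ∨ ∃ y ∈ C, x = 1 / (2 + y))
    {Q : ℝ} (hQ : 1 ≤ Q) (n : ℕ) :
    ∀ p p' q q' : ℝ, 1 ≤ q → 0 ≤ q' → q' ≤ q → q ≤ 7 * Q → 2 * Q ≤ q + q' + n →
      |p * q' - p' * q| = 1 →
      (∃ F : Finset ℝ, (F.card : ℝ) ≤ 21 * (Q / (2 * q + q')) ^ (9 / 10 : ℝ) ∧
        ∀ x ∈ A, ∃ z ∈ F, |(p + p' * x) / (q + q' * x) - z| ≤ 1 / Q ^ 2) ∧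
      (∃ F : Finset ℝ, (F.card : ℝ) ≤ 28 * (Q / (2 * q + q')) ^ (9 / 10 : ℝ) ∧
        ∀ x ∈ C, ∃ z ∈ F, |(p + p' * x) / (q + q' * x) - z| ≤ 1 / Q ^ 2) := by
  induction n with
  | zero =>
    intro p p' q q' hq hq' hqq' hqQ hn hdet
    rw [Nat.cast_zero, add_zero] at hn
    exact ⟨exists_finset_cover_of_le hA (by norm_num) hQ hq' hqq' (by linarith) hqQ hdet,
      exists_finset_cover_of_le hC (by norm_num) hQ hq' hqq' (by linarith) hqQ hdet⟩
  | succ n ih =>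
    intro p p' q q' hq hq' hqq' hqQ hn hdet
    rcases le_or_gt Q q with h | h
    · exact ⟨exists_finset_cover_of_le hA (by norm_num) hQ hq' hqq' h hqQ hdet,
        exists_finset_cover_of_le hC (by norm_num) hQ hq' hqq' h hqQ hdet⟩
    push_cast at hn
    have hu : 0 ≤ (Q / (2 * q + q')) ^ (9 / 10 : ℝ) := by positivity
    have hdet' : |(p * q' - p' * q) * -1| = 1 := by rw [abs_mul, hdet]; simp
    obtain ⟨⟨F₁, hF₁, hc₁⟩, -⟩ := ih (p + p') p (q + q') q (by linarith) (by linarith)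
      (by linarith) (by linarith) (by linarith) (by rw [← hdet']; ring_nf)
    obtain ⟨-, F₂, hF₂, hc₂⟩ := ih (2 * p + p') p (2 * q + q') q (by linarith) (by linarith)
      (by linarith) (by linarith) (by linarith) (by rw [← hdet']; ring_nf)
    obtain ⟨-, F₃, hF₃, hc₃⟩ := ih (5 * p + 2 * p') (2 * p + p') (5 * q + 2 * q') (2 * q + q')
      (by linarith) (by linarith) (by linarith) (by linarith) (by linarith)
      (by rw [← hdet]; ring_nf)
    have h₁ : (Q / (2 * (q + q') + q)) ^ (9 / 10 : ℝ) ≤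
        7 / 10 * (Q / (2 * q + q')) ^ (9 / 10 : ℝ) :=
      div_rpow_le_of_ratio (r := 2 / 3) (by linarith) (by linarith) (by linarith) (by norm_num)
        (by linarith) (by norm_num) (by norm_num)
    have h₂ : (Q / (2 * (2 * q + q') + q)) ^ (9 / 10 : ℝ) ≤
        47 / 100 * (Q / (2 * q + q')) ^ (9 / 10 : ℝ) :=
      div_rpow_le_of_ratio (r := 3 / 7) (by linarith) (by linarith) (by linarith) (by norm_num)
        (by linarith) (by norm_num) (by norm_num)
    have h₃ : (Q / (2 * (5 * q + 2 * q') + (2 * q + q'))) ^ (9 / 10 : ℝ) ≤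
        22 / 100 * (Q / (2 * q + q')) ^ (9 / 10 : ℝ) :=
      div_rpow_le_of_ratio (r := 3 / 17) (by linarith) (by linarith) (by linarith) (by norm_num)
        (by linarith) (by norm_num) (by norm_num)
    have hpos : ∀ y : ℝ, 0 ≤ y → 0 ≤ q' * y ∧ 0 ≤ q * y := fun y hy =>
      ⟨by positivity, by positivity⟩
    have e₁ : ∀ y : ℝ, 0 ≤ y → (p + p' * (1 / (1 + y))) / (q + q' * (1 / (1 + y))) =
        (p + p' + p * y) / (q + q' + q * y) := fun y hy => by
      have := hpos y hy
      have h1 : 1 + y ≠ 0 := by linarith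
      have h2 : q + q' + q * y ≠ 0 := by linarith
      have h3 : q + q' * (1 / (1 + y)) ≠ 0 := by
        have : 0 ≤ q' * (1 / (1 + y)) := by positivity
        linarith
      rw [div_eq_div_iff h3 h2]; field_simp; ring
    have e₂ : ∀ (p p' q q' y : ℝ), 1 ≤ q → 0 ≤ q' → 0 ≤ y →
        (p + p' * (1 / (2 + y))) / (q + q' * (1 / (2 + y))) =
        (2 * p + p' + p * y) / (2 * q + q' + q * y) := fun p p' q q' y hq hq' hy => by
      have h0 : 0 ≤ q * y := by positivity
      have h1 : 2 + y ≠ 0 := by linarith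
      have h2 : 2 * q + q' + q * y ≠ 0 := by linarith
      have h3 : q + q' * (1 / (2 + y)) ≠ 0 := by
        have : 0 ≤ q' * (1 / (2 + y)) := by positivity
        linarith
      rw [div_eq_div_iff h3 h2]; field_simp; ring
    have hcard : ∀ F G : Finset ℝ, ((F ∪ G).card : ℝ) ≤ F.card + G.card := fun F G => by
      exact_mod_cast Finset.card_union_le F G
    refine ⟨⟨F₁ ∪ F₃, (hcard _ _).trans (by linarith), fun x hx => ?_⟩,
      ⟨F₁ ∪ F₂, (hcard _ _).trans (by linarith), fun x hx => ?_⟩⟩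
    · obtain ⟨y, hy, rfl⟩ | ⟨y, hy, rfl⟩ := hAs x hx
      · obtain ⟨z, hz, hzx⟩ := hc₁ y hy
        exact ⟨z, Finset.mem_union_left _ hz, by rwa [e₁ y (hA y hy).1]⟩
      · obtain ⟨z, hz, hzx⟩ := hc₃ y hy
        have hy0 := (hC y hy).1
        refine ⟨z, Finset.mem_union_right _ hz, ?_⟩
        rw [e₂ p p' q q' _ hq hq' (by positivity), e₂ _ _ _ _ y (by linarith) (by linarith) hy0]
        convert hzx using 4 <;> ring
    · obtain ⟨y, hy, rfl⟩ | ⟨y, hy, rfl⟩ := hCs x hx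
      · obtain ⟨z, hz, hzx⟩ := hc₁ y hy
        exact ⟨z, Finset.mem_union_left _ hz, by rwa [e₁ y (hA y hy).1]⟩
      · obtain ⟨z, hz, hzx⟩ := hc₂ y hy
        exact ⟨z, Finset.mem_union_right _ hz, by rwa [e₂ p p' q q' y hq hq' (hC y hy).1]⟩

theorem hausdorffMeasure_ne_top_of_cover {E : Set ℝ} {K s : ℝ} (hs : 0 ≤ s)
    (h : ∀ Q : ℕ, 0 < Q → ∃ F : Finset ℝ, (F.card : ℝ) ≤ K * ((Q : ℝ) ^ 2) ^ s ∧
      ∀ t ∈ E, ∃ z ∈ F, |t - z| ≤ 3 / (Q : ℝ) ^ 2) :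
    MeasureTheory.Measure.hausdorffMeasure s E ≠ ⊤ := by
  have h' : ∀ n : ℕ, ∃ F : Finset ℝ, (F.card : ℝ) ≤ K * (((n : ℝ) + 1) ^ 2) ^ s ∧
      ∀ t ∈ E, ∃ z ∈ F, |t - z| ≤ 3 / ((n : ℝ) + 1) ^ 2 := fun n => by
    simpa using h (n + 1) n.succ_pos
  choose F hF hcov using h'
  have hr : Filter.Tendsto (fun n : ℕ => ENNReal.ofReal (6 / ((n : ℝ) + 1) ^ 2))
      Filter.atTop (nhds 0) := by
    rw [← ENNReal.ofReal_zero]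
    refine ENNReal.tendsto_ofReal ?_
    have h1 : Filter.Tendsto (fun n : ℕ => 6 * ((1 / ((n : ℝ) + 1)) * (1 / ((n : ℝ) + 1))))
        Filter.atTop (nhds (6 * (0 * 0))) :=
      (tendsto_one_div_add_atTop_nhds_zero_nat.mul
        tendsto_one_div_add_atTop_nhds_zero_nat).const_mul 6
    simp only [mul_zero] at h1
    refine h1.congr fun n => ?_
    field_simp
  have hd : ∀ (n : ℕ) (i : F n), Metric.ediam (Metric.closedBall (i : ℝ) (3 / ((n : ℝ) + 1) ^ 2)) ≤
      ENNReal.ofReal (6 / ((n : ℝ) + 1) ^ 2) := fun n i => by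
    rw [Real.closedBall_eq_Icc, Real.ediam_Icc]
    exact ENNReal.ofReal_le_ofReal (by ring_nf; rfl)
  have key := MeasureTheory.Measure.hausdorffMeasure_le_liminf_sum s E
    (fun n : ℕ => ENNReal.ofReal (6 / ((n : ℝ) + 1) ^ 2)) hr
    (fun (n : ℕ) (i : F n) => Metric.closedBall (i : ℝ) (3 / ((n : ℝ) + 1) ^ 2))
    (Filter.Eventually.of_forall hd)
    (Filter.Eventually.of_forall fun n t ht => by
      obtain ⟨z, hz, hzt⟩ := hcov n t ht
      exact Set.mem_iUnion.2 ⟨⟨z, hz⟩, by simpa [Real.dist_eq] using hzt⟩)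
  have hb : ∀ n : ℕ, ∑ i : F n,
      Metric.ediam (Metric.closedBall (i : ℝ) (3 / ((n : ℝ) + 1) ^ 2)) ^ s ≤
        ENNReal.ofReal (K * 6 ^ s) := fun n => by
    have hp : (0 : ℝ) < ((n : ℝ) + 1) ^ 2 := by positivity
    calc _ ≤ ∑ i : F n, ENNReal.ofReal (6 / ((n : ℝ) + 1) ^ 2) ^ s :=
          Finset.sum_le_sum fun i _ => ENNReal.rpow_le_rpow (hd n i) hs
      _ = ENNReal.ofReal ((F n).card * (6 / ((n : ℝ) + 1) ^ 2) ^ s) := by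
          rw [ENNReal.ofReal_rpow_of_nonneg (by positivity) hs,
            ENNReal.ofReal_mul (by positivity)]
          simp
      _ ≤ _ := by
          refine ENNReal.ofReal_le_ofReal ?_
          calc _ ≤ (K * (((n : ℝ) + 1) ^ 2) ^ s) * (6 / ((n : ℝ) + 1) ^ 2) ^ s := by
                gcongr; exact hF n
            _ = _ := by
                rw [Real.div_rpow (by norm_num) hp.le]
                have := (Real.rpow_pos_of_pos hp s).ne'
                field_simp
  refine ne_top_of_le_ne_top (ENNReal.ofReal_ne_top (r := K * 6 ^ s)) (key.trans ?_)
  exact (Filter.liminf_le_liminf (Filter.Eventually.of_forall hb)).trans (by simp)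

/-- The form `(X - (a + x) Y) (X + y Y)`, whose roots have continued fraction expansions with
integral part `a` and tails `x` and `y`, has Markov value at most `m`. -/
structure IsTailPair (m : ℝ) (a : ℤ) (x y : ℝ) : Prop where
  one_le : 1 ≤ a
  left_mem : x ∈ Set.Ioo (0 : ℝ) 1
  right_mem : y ∈ Set.Ioo (0 : ℝ) 1
  le_mul : ∀ p q : ℤ, (p, q) ≠ (0, 0) →
    a + x + y ≤ m * (|p - (a + x) * q| * |p + y * q|)

namespace IsTailPair

variable {m x y : ℝ} {a : ℤ}

theorem symm (h : IsTailPair m a x y) : IsTailPair m a y x := by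
  refine ⟨h.one_le, h.right_mem, h.left_mem, fun p q hpq => ?_⟩
  have := h.le_mul (a * q - p) q (by
    rintro h'
    simp only [Prod.mk.injEq] at h'
    obtain ⟨h1, rfl⟩ := h'
    exact hpq (by simp at h1; simp [h1]))
  push_cast at this
  rw [show (a * q - p - (a + x) * q : ℝ) = -(p + x * q) by ring,
    show (a * q - p + y * q : ℝ) = -(p - (a + y) * q) by ring, abs_neg, abs_neg,
    mul_comm |_|] at this
  linarith

theorem add_le (h : IsTailPair m a x y) : a + x + y ≤ m := by
  simpa using h.le_mul 1 0 (by simp)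

theorem le_two (hm : m ^ 2 < 10) (h : IsTailPair m a x y) : a ≤ 2 := by
  by_contra! ha
  have ha' : (3 : ℝ) ≤ a := by exact_mod_cast ha
  have h1 := h.add_le
  obtain ⟨hx0, hx1⟩ := h.left_mem
  obtain ⟨hy0, hy1⟩ := h.right_mem
  have hm' : m < 3.17 := by nlinarith
  have ha3 : a = 3 := by
    have : (a : ℝ) < 4 := by linarith
    have : a < 4 := by exact_mod_cast this
    omega
  subst ha3
  have h2 := h.le_mul 3 1 (by simp)
  push_cast at h1 h2
  rw [mul_one, mul_one, show (3 - (3 + x) : ℝ) = -x by ring, abs_neg, abs_of_pos hx0,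
    abs_of_pos (by linarith)] at h2
  have h3 : x * (3 + y) ≤ 0.17 * 3.17 := by gcongr <;> linarith
  nlinarith

theorem exists_next (h : IsTailPair m a x y) :
    ∃ (b : ℤ) (z : ℝ), x = 1 / (b + z) ∧ IsTailPair m b z (1 / (a + y)) := by
  obtain ⟨hx0, hx1⟩ := h.left_mem
  obtain ⟨hy0, hy1⟩ := h.right_mem
  have ha : (1 : ℝ) ≤ a := by exact_mod_cast h.one_le
  have hay : (0 : ℝ) < a + y := by linarith
  have key : ∀ p q : ℤ, (p, q) ≠ (0, 0) →
      1 / x + 1 / (a + y) ≤ m * (|p - (1 / x) * q| * |p + 1 / (a + y) * q|) := by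
    intro p q hpq
    have h1 := h.le_mul (a * p + q) p (by
      rintro h'
      simp only [Prod.mk.injEq] at h'
      obtain ⟨h1, rfl⟩ := h'
      exact hpq (by simpa using h1))
    push_cast at h1
    have e1 : (a * p + q - (a + x) * p : ℝ) = -(x * (p - (1 / x) * q)) := by field_simp; ring
    have e2 : (a * p + q + y * p : ℝ) = (a + y) * (p + 1 / (a + y) * q) := by field_simp; ring
    rw [e1, e2, abs_neg, abs_mul, abs_mul, abs_of_pos hx0, abs_of_pos hay] at h1
    have e3 : 1 / x + 1 / (a + y) = (a + x + y) / (x * (a + y)) := by field_simp; ring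
    rw [e3, div_le_iff₀ (by positivity)]
    linarith
  have hx : 1 < 1 / x := by rwa [lt_div_iff₀ hx0, one_mul]
  have hfract : (⌊1 / x⌋ : ℝ) + Int.fract (1 / x) = 1 / x := Int.floor_add_fract _
  have hfloor : 1 ≤ ⌊1 / x⌋ := Int.le_floor.2 (by exact_mod_cast hx.le)
  refine ⟨⌊1 / x⌋, Int.fract (1 / x), by rw [hfract, one_div_one_div], hfloor,
    ⟨lt_of_le_of_ne (Int.fract_nonneg _) fun h0 => ?_, Int.fract_lt_one _⟩,
    ⟨by positivity, by rw [div_lt_one hay]; linarith⟩, ?_⟩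
  · have := key ⌊1 / x⌋ 1 (by simp)
    rw [← h0, add_zero] at hfract
    rw [hfract] at this
    simp only [Int.cast_one, mul_one, sub_self, abs_zero, zero_mul, mul_zero] at this
    have : 0 < 1 / (a + y) := by positivity
    linarith
  · rw [hfract]; exact key

theorem eq_one_or_two (hm : m ^ 2 < 10) (h : IsTailPair m a x y) : a = 1 ∨ a = 2 := by
  have := h.one_le
  have := h.le_two hm
  omega

theorem exists_next_one_or_two (hm : m ^ 2 < 10) (h : IsTailPair m a x y) :
    (∃ z, x = 1 / (1 + z) ∧ IsTailPair m 1 z (1 / (a + y))) ∨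
      ∃ z, x = 1 / (2 + z) ∧ IsTailPair m 2 z (1 / (a + y)) := by
  obtain ⟨b, z, hz, hb⟩ := h.exists_next
  obtain rfl | rfl := hb.eq_one_or_two hm
  · exact Or.inl ⟨z, by simpa using hz, hb⟩
  · exact Or.inr ⟨z, by simpa using hz, hb⟩

theorem exists_next_one (hm : m ^ 2 < 10) (h : IsTailPair m a x y) (hx : 1 / 2 < x) :
    ∃ z, x = 1 / (1 + z) ∧ IsTailPair m 1 z (1 / (a + y)) := by
  refine (h.exists_next_one_or_two hm).resolve_right ?_
  rintro ⟨z, rfl, hz⟩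
  have := hz.left_mem.1
  rw [div_lt_div_iff₀ (by norm_num) (by linarith)] at hx
  linarith

theorem exists_next_two (hm : m ^ 2 < 10) (h : IsTailPair m a x y) (hx : x < 1 / 2) :
    ∃ z, x = 1 / (2 + z) ∧ IsTailPair m 2 z (1 / (a + y)) := by
  refine (h.exists_next_one_or_two hm).resolve_left ?_
  rintro ⟨z, rfl, hz⟩
  obtain ⟨hz0, hz1⟩ := hz.left_mem
  rw [div_lt_div_iff₀ (by linarith) (by norm_num)] at hx
  linarith

/-- Around the pattern `121`, a defect from the critical tail `√10 / 2 - 1` at least doubles. -/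
theorem exists_double_defect (hm : m ^ 2 < 10) (h : IsTailPair m 2 x y) (hx : 1 / 2 < x)
    {δ : ℝ} (hδ : 0 < δ) (hxδ : x ≤ √10 / 2 - 1 - δ) :
    ∃ x' y', IsTailPair m 2 x' y' ∧ 1 / 2 < x' ∧ x' ≤ √10 / 2 - 1 - 2 * δ := by
  have hs : √10 ^ 2 = 10 := Real.sq_sqrt (by norm_num)
  have hs0 : 0 ≤ √10 := Real.sqrt_nonneg 10
  have hs1 : √10 < 3.163 := by nlinarith
  have hs2 : 3.162 < √10 := by nlinarith
  have hms : m < √10 := by nlinarith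
  obtain ⟨hy0, hy1⟩ := h.right_mem
  obtain ⟨x₁, hx₁, h₁⟩ := h.exists_next_one hm hx
  have hx₁0 := h₁.left_mem.1
  have hx₁l : 1 / 2 < x₁ := by
    have : x * (1 + x₁) = 1 := by rw [hx₁]; field_simp
    nlinarith
  have hx₁m : 0.72 < x₁ := by
    have : x * (1 + x₁) = 1 := by rw [hx₁]; field_simp
    nlinarith
  obtain ⟨x₂, hx₂, h₂⟩ := h₁.exists_next_one hm hx₁l
  have hx₂0 := h₂.left_mem.1
  have hx₂m : x₂ < 1 / 2 := by
    have : x₁ * (1 + x₂) = 1 := by rw [hx₂]; field_simp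
    nlinarith
  obtain ⟨x₃, hx₃, h₃⟩ := h₂.exists_next_two hm hx₂m
  have hx₃0 := h₃.left_mem.1
  have hadd := h₃.add_le
  have hxx : x * (5 + 2 * x₃) = 3 + x₃ := by
    rw [hx₁, hx₂, hx₃]; field_simp; ring
  have hdef : (√10 / 2 - 1 - x) * ((5 + 2 * x₃) * (3 + √10)) = x₃ - (√10 / 2 - 1) := by
    linear_combination (-(3 + √10)) * hxx + (5 + 2 * x₃) / 2 * hs
  have hgrow : 15 * δ ≤ x₃ - (√10 / 2 - 1) := by
    rw [← hdef]
    have : (15 : ℝ) ≤ (5 + 2 * x₃) * (3 + √10) := by nlinarith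
    nlinarith
  refine ⟨_, x₃, h₃.symm, ?_, ?_⟩
  · push_cast
    have : (1 : ℝ) / (2 + y) < 1 := by rw [div_lt_one (by linarith)]; linarith
    have h0 : (0 : ℝ) < 1 / (2 + y) := by positivity
    have : 1 / (1 + 1 / (2 + y)) < 1 := by rw [div_lt_one (by linarith)]; linarith
    have h0 : 0 < 1 / (1 + 1 / (2 + y)) := by positivity
    rw [div_lt_div_iff₀ (by norm_num) (by linarith)]
    linarith
  · push_cast at hadd ⊢
    linarith

/-- A tail next to the pattern `121` is at least the critical tail of the period `2, 1, 1`. -/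
theorem critical_le (hm : m ^ 2 < 10) (h : IsTailPair m 2 x y) (hx : 1 / 2 < x) :
    √10 / 2 - 1 ≤ x := by
  by_contra! hlt
  have hall : ∀ n : ℕ, ∃ x' y', IsTailPair m 2 x' y' ∧ 1 / 2 < x' ∧
      x' ≤ √10 / 2 - 1 - 2 ^ n * (√10 / 2 - 1 - x) := by
    intro n
    induction n with
    | zero => exact ⟨x, y, h, hx, by linarith⟩
    | succ n ih =>
      obtain ⟨x', y', h', hx', hle⟩ := ih
      obtain ⟨x'', y'', h'', hx'', hle'⟩ :=
        h'.exists_double_defect hm hx' (mul_pos (by positivity) (sub_pos.2 hlt)) hle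
      exact ⟨x'', y'', h'', hx'', by rw [pow_succ]; linarith⟩
  obtain ⟨n, hn⟩ := pow_unbounded_of_one_lt (√10 / 2 / (√10 / 2 - 1 - x)) one_lt_two
  rw [div_lt_iff₀ (sub_pos.2 hlt)] at hn
  obtain ⟨x', -, -, hx', hle⟩ := hall n
  linarith

theorem not_one_two_one (hm : m ^ 2 < 10) (h : IsTailPair m 2 x y) (hx : 1 / 2 < x) :
    y ≤ 1 / 2 := by
  by_contra! hy
  have h1 := h.critical_le hm hx
  have h2 := h.symm.critical_le hm hy
  have h3 := h.add_le
  have hs : √10 ^ 2 = 10 := Real.sq_sqrt (by norm_num)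
  have hs0 : 0 ≤ √10 := Real.sqrt_nonneg 10
  push_cast at h3
  nlinarith

end IsTailPair

/-- The continued fraction tails that follow the digit `a` in expansions with Markov value
below `√10`. -/
def tailSet (a : ℤ) : Set ℝ :=
  {x | ∃ m y : ℝ, m ^ 2 < 10 ∧ IsTailPair m a x y}

theorem tailSet_subset_Icc {a : ℤ} {x : ℝ} (hx : x ∈ tailSet a) : 0 ≤ x ∧ x ≤ 1 := by
  obtain ⟨m, y, -, h⟩ := hx
  exact ⟨h.left_mem.1.le, h.left_mem.2.le⟩

theorem tailSet_two {x : ℝ} (hx : x ∈ tailSet 2) :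
    (∃ y ∈ tailSet 1, x = 1 / (1 + y)) ∨ ∃ y ∈ tailSet 2, x = 1 / (2 + y) := by
  obtain ⟨m, y, hm, h⟩ := hx
  obtain ⟨z, hz, h'⟩ | ⟨z, hz, h'⟩ := h.exists_next_one_or_two hm
  · exact Or.inl ⟨z, ⟨m, _, hm, h'⟩, hz⟩
  · exact Or.inr ⟨z, ⟨m, _, hm, h'⟩, hz⟩

theorem tailSet_one {x : ℝ} (hx : x ∈ tailSet 1) :
    (∃ y ∈ tailSet 1, x = 1 / (1 + y)) ∨ ∃ y ∈ tailSet 2, x = 1 / (2 + 1 / (2 + y)) := by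
  obtain ⟨m, y, hm, h⟩ := hx
  obtain ⟨z, hz, h'⟩ | ⟨z, hz, h'⟩ := h.exists_next_one_or_two hm
  · exact Or.inl ⟨z, ⟨m, _, hm, h'⟩, hz⟩
  · obtain ⟨w, hw, h''⟩ | ⟨w, hw, h''⟩ := h'.exists_next_one_or_two hm
    · have hw1 := h''.left_mem
      have hy := h.right_mem
      have hz2 : 1 / 2 < z := by
        rw [hw, div_lt_div_iff₀ (by norm_num) (by linarith [hw1.1])]
        linarith [hw1.2]
      have := h'.not_one_two_one hm hz2
      push_cast at this
      rw [div_le_div_iff₀ (by linarith [hy.1]) (by norm_num)] at this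
      linarith [hy.2]
    · exact Or.inr ⟨w, ⟨m, _, hm, h''⟩, by rw [hz, hw]⟩

theorem exists_isTailPair_of_roots {α β t : ℝ} (hαβ : 2 < α - β)
    (h : ∀ p q : ℤ, (p, q) ≠ (0, 0) → α - β ≤ t * (|p - α * q| * |p - β * q|)) :
    ∃ (a : ℤ) (x y : ℝ), IsTailPair t a x y ∧ a + x + y = α - β := by
  set n : ℤ := ⌊β⌋ + 1 with hn
  have hβ := Int.floor_le β
  have hβ' := Int.lt_floor_add_one β
  have hnr : (n : ℝ) = ⌊β⌋ + 1 := by rw [hn]; push_cast; ring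
  have hfl : (⌊α - n⌋ : ℝ) + Int.fract (α - n) = α - n := Int.floor_add_fract _
  have key : ∀ p q : ℤ, (p, q) ≠ (0, 0) →
      ⌊α - n⌋ + Int.fract (α - n) + (n - β) ≤
        t * (|p - (⌊α - n⌋ + Int.fract (α - n)) * q| * |p + (n - β) * q|) := by
    intro p q hpq
    have := h (p + n * q) q (by
      rintro h'
      simp only [Prod.mk.injEq] at h'
      obtain ⟨h1, rfl⟩ := h'
      exact hpq (by simpa using h1))
    push_cast at this
    rw [hfl]
    convert this using 1
    · ring
    · congr 2 <;> ring_nf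
  refine ⟨⌊α - n⌋, Int.fract (α - n), n - β, ⟨Int.le_floor.2 ?_, ⟨lt_of_le_of_ne
    (Int.fract_nonneg _) fun h0 => ?_, Int.fract_lt_one _⟩, ⟨by linarith, lt_of_le_of_ne
    (by linarith) fun h0 => ?_⟩, key⟩, by rw [hfl]; ring⟩
  · push_cast; linarith
  · have := key ⌊α - n⌋ 1 (by simp)
    rw [← h0, add_zero] at hfl
    rw [← h0, add_zero, hfl] at this
    simp only [Int.cast_one, mul_one, sub_self, abs_zero, zero_mul, mul_zero] at this
    linarith
  · have := key (-1) 1 (by simp)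
    rw [h0, hfl] at this
    simp at this
    linarith

theorem exists_isTailPair_of_form {a b c t ε : ℝ} (hΔ : 0 < b ^ 2 - 4 * a * c)
    (hle : ∀ p q : ℤ, (p, q) ≠ (0, 0) → a * p ^ 2 + b * p * q + c * q ^ 2 ≠ 0 ∧
      √(b ^ 2 - 4 * a * c) ≤ t * |a * p ^ 2 + b * p * q + c * q ^ 2|)
    (hε : 2 ≤ t - ε) {p q : ℤ} (hpq : (p, q) ≠ (0, 0))
    (hlt : (t - ε) * |a * p ^ 2 + b * p * q + c * q ^ 2| < √(b ^ 2 - 4 * a * c)) :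
    ∃ (k : ℤ) (x y : ℝ), IsTailPair t k x y ∧ |t - (k + x + y)| ≤ ε := by
  have hg : 0 < Int.gcd p q := by
    rw [Int.gcd_pos_iff]
    by_contra! h
    exact hpq (by simp [h.1, h.2])
  obtain ⟨p₀, q₀, hcop, hp, hq⟩ := Int.exists_gcd_one hg
  generalize Int.gcd p q = g at hg hp hq
  obtain ⟨u, v, huv⟩ := Int.isCoprime_iff_gcd_eq_one.2 hcop
  have huv' : (u * p₀ + v * q₀ : ℝ) = 1 := by exact_mod_cast huv
  have hpq₀ : (p₀, q₀) ≠ (0, 0) := by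
    rintro h
    simp only [Prod.mk.injEq] at h
    simp [h.1, h.2] at huv
  obtain ⟨hA0, hA1⟩ := hle p₀ q₀ hpq₀
  set D := √(b ^ 2 - 4 * a * c) with hD
  have hD0 : 0 < D := Real.sqrt_pos.2 hΔ
  have hD2 : D ^ 2 = b ^ 2 - 4 * a * c := Real.sq_sqrt hΔ.le
  obtain ⟨A, hA⟩ : ∃ A : ℝ, A = a * p₀ ^ 2 + b * p₀ * q₀ + c * q₀ ^ 2 := ⟨_, rfl⟩
  obtain ⟨B, hB⟩ : ∃ B : ℝ,
      B = -2 * a * p₀ * v + b * (p₀ * u - v * q₀) + 2 * c * q₀ * u := ⟨_, rfl⟩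
  rw [← hA] at hA0 hA1
  have hApos : 0 < |A| := abs_pos.2 hA0
  have hA_lt : (t - ε) * |A| < D := by
    refine lt_of_le_of_lt ?_ hlt
    have hg1 : (1 : ℝ) ≤ g := by exact_mod_cast hg
    have e : a * p ^ 2 + b * p * q + c * q ^ 2 = g ^ 2 * A := by
      rw [hp, hq, hA]; push_cast; ring
    rw [e, abs_mul, abs_of_nonneg (sq_nonneg (g : ℝ))]
    have : |A| ≤ g ^ 2 * |A| := le_mul_of_one_le_left hApos.le (one_le_pow₀ hg1)
    exact mul_le_mul_of_nonneg_left this (by linarith)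
  have hdiff : (-B / A + D / |A|) / 2 - (-B / A - D / |A|) / 2 = D / |A| := by ring
  have hle_t : D / |A| ≤ t := by rwa [div_le_iff₀ hApos]
  have hlt_t : t - ε < D / |A| := by rwa [lt_div_iff₀ hApos]
  obtain ⟨k, x, y, hk, hsum⟩ := exists_isTailPair_of_roots (t := t)
    (α := (-B / A + D / |A|) / 2) (β := (-B / A - D / |A|) / 2) (by rw [hdiff]; linarith) (by
      intro X Y hXY
      obtain ⟨-, h1⟩ := hle (p₀ * X - v * Y) (q₀ * X + u * Y) (by
        rintro h
        simp only [Prod.mk.injEq] at h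
        obtain ⟨h1, h2⟩ := h
        have hX : X = 0 := by linear_combination u * h1 + v * h2 - X * huv
        have hY : Y = 0 := by linear_combination p₀ * h2 - q₀ * h1 - Y * huv
        exact hXY (by rw [hX, hY]))
      push_cast at h1
      have hDA : (D / |A|) ^ 2 = D ^ 2 / A ^ 2 := by rw [div_pow, sq_abs]
      have hdisc : B ^ 2 - D ^ 2 =
          4 * A * (a * v ^ 2 - b * u * v + c * u ^ 2) := by
        rw [hD2, hA, hB]
        linear_combination (b ^ 2 - 4 * a * c) * (u * p₀ + v * q₀ + 1 : ℝ) * huv'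
      have e : (X - (-B / A + D / |A|) / 2 * Y) * (X - (-B / A - D / |A|) / 2 * Y) =
          (a * (p₀ * X - v * Y) ^ 2 + b * (p₀ * X - v * Y) * (q₀ * X + u * Y) +
            c * (q₀ * X + u * Y) ^ 2) / A := by
        have e1 : (X - (-B / A + D / |A|) / 2 * Y) * (X - (-B / A - D / |A|) / 2 * Y) =
            X ^ 2 + B / A * X * Y + (B ^ 2 / A ^ 2 - (D / |A|) ^ 2) / 4 * Y ^ 2 := by ring
        have e2 : a * (p₀ * X - v * Y) ^ 2 + b * (p₀ * X - v * Y) * (q₀ * X + u * Y) +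
            c * (q₀ * X + u * Y) ^ 2 =
            A * X ^ 2 + B * X * Y + (a * v ^ 2 - b * u * v + c * u ^ 2) * Y ^ 2 := by
          rw [hA, hB]; ring
        rw [e1, e2, hDA, ← sub_div, hdisc]
        field_simp
      rw [hdiff, ← abs_mul, e, abs_div, ← mul_div_assoc]
      gcongr)
  rw [hdiff] at hsum
  exact ⟨k, x, y, hk, by rw [hsum, abs_le]; constructor <;> linarith⟩

theorem exists_isTailPair_of_mem {t ε : ℝ} (ht : t ∈ MarkovSpectrum) (hε : 0 < ε)
    (htε : 2 ≤ t - ε) :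
    ∃ (k : ℤ) (x y : ℝ), IsTailPair t k x y ∧ |t - (k + x + y)| ≤ ε := by
  obtain ⟨a, b, c, hΔ, htop, rfl⟩ := ht
  set t := (markovVal a b c).toReal with ht
  have hval : ENNReal.ofReal t = markovVal a b c := ENNReal.ofReal_toReal htop
  have hD0 : 0 < √(b ^ 2 - 4 * a * c) := Real.sqrt_pos.2 hΔ
  have hne : ∀ p q : ℤ, (p, q) ≠ (0, 0) → a * p ^ 2 + b * p * q + c * q ^ 2 ≠ 0 ∧
      √(b ^ 2 - 4 * a * c) ≤ t * |a * p ^ 2 + b * p * q + c * q ^ 2| := by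
    intro p q hpq
    have h1 : ENNReal.ofReal √(b ^ 2 - 4 * a * c) /
        ENNReal.ofReal |a * (p : ℝ) ^ 2 + b * p * q + c * (q : ℝ) ^ 2| ≤ markovVal a b c :=
      le_iSup₂_of_le (f := fun (pq : ℤ × ℤ) (_ : pq ≠ (0, 0)) =>
        ENNReal.ofReal √(b ^ 2 - 4 * a * c) /
          ENNReal.ofReal |a * (pq.1 : ℝ) ^ 2 + b * pq.1 * pq.2 + c * (pq.2 : ℝ) ^ 2|)
        (p, q) hpq le_rfl
    have h0 : a * (p : ℝ) ^ 2 + b * p * q + c * (q : ℝ) ^ 2 ≠ 0 := by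
      intro h0
      rw [h0, abs_zero, ENNReal.ofReal_zero,
        ENNReal.div_zero (ENNReal.ofReal_pos.2 hD0).ne'] at h1
      exact htop (top_le_iff.1 h1)
    refine ⟨h0, ?_⟩
    rw [← hval, ← ENNReal.ofReal_div_of_pos (abs_pos.2 h0),
      ENNReal.ofReal_le_ofReal_iff (by linarith), div_le_iff₀ (abs_pos.2 h0)] at h1
    exact h1
  have hlt : ENNReal.ofReal (t - ε) < markovVal a b c := by
    rw [← hval, ENNReal.ofReal_lt_ofReal_iff (by linarith)]
    linarith
  rw [markovVal] at hlt
  simp only [lt_iSup_iff] at hlt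
  obtain ⟨⟨p, q⟩, hpq, hlt⟩ := hlt
  have h0 := (hne p q hpq).1
  simp only at hlt
  rw [← ENNReal.ofReal_div_of_pos (abs_pos.2 h0),
    ENNReal.ofReal_lt_ofReal_iff (by positivity), lt_div_iff₀ (abs_pos.2 h0)] at hlt
  exact exists_isTailPair_of_form hΔ hne htε hpq hlt

theorem exists_finset_cover_markovSpectrum (Q : ℕ) (hQ : 0 < Q) :
    ∃ F : Finset ℝ, (F.card : ℝ) ≤ 4802 * ((Q : ℝ) ^ 2) ^ (9 / 10 : ℝ) ∧
      ∀ t ∈ MarkovSpectrum ∩ Set.Ico √5 √10, ∃ z ∈ F, |t - z| ≤ 3 / (Q : ℝ) ^ 2 := by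
  have hQ1 : (1 : ℝ) ≤ Q := by exact_mod_cast hQ
  obtain ⟨⟨F₁, hF₁, hc₁⟩, F₂, hF₂, hc₂⟩ := exists_finset_cover (A := tailSet 1)
    (C := tailSet 2) (fun x hx => tailSet_subset_Icc hx) (fun x hx => tailSet_subset_Icc hx)
    (fun x hx => tailSet_one hx) (fun x hx => tailSet_two hx) hQ1 (2 * Q) 0 1 1 0 le_rfl le_rfl
    zero_le_one (by linarith) (by push_cast; linarith) (by norm_num)
  simp only [mul_one, add_zero, zero_add, one_mul, zero_mul, div_one] at hF₁ hF₂ hc₁ hc₂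
  have hcov : ∀ k : ℤ, k = 1 ∨ k = 2 → ∀ x ∈ tailSet k,
      ∃ z ∈ F₁ ∪ F₂, |x - z| ≤ 1 / (Q : ℝ) ^ 2 := by
    rintro k (rfl | rfl) x hx
    · obtain ⟨z, hz, h⟩ := hc₁ x hx
      exact ⟨z, Finset.mem_union_left _ hz, h⟩
    · obtain ⟨z, hz, h⟩ := hc₂ x hx
      exact ⟨z, Finset.mem_union_right _ hz, h⟩
  have hcard : ((F₁ ∪ F₂).card : ℝ) ≤ 49 * (Q : ℝ) ^ (9 / 10 : ℝ) := by
    have h1 : ((F₁ ∪ F₂).card : ℝ) ≤ F₁.card + F₂.card := by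
      exact_mod_cast Finset.card_union_le F₁ F₂
    have h2 : ((Q : ℝ) / 2) ^ (9 / 10 : ℝ) ≤ (Q : ℝ) ^ (9 / 10 : ℝ) := by
      gcongr; linarith
    linarith
  generalize F₁ ∪ F₂ = F at hcov hcard
  refine ⟨(({1, 2} : Finset ℤ) ×ˢ F ×ˢ F).image fun w => w.1 + w.2.1 + w.2.2, ?_, ?_⟩
  · have h1 : (((({1, 2} : Finset ℤ) ×ˢ F ×ˢ F).image fun w => (w.1 : ℝ) + w.2.1 + w.2.2).card : ℝ)
        ≤ 2 * (F.card * F.card) := by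
      refine (Nat.cast_le.2 Finset.card_image_le).trans (le_of_eq ?_)
      rw [Finset.card_product, Finset.card_product]
      simp
    have h2 : ((Q : ℝ) ^ 2) ^ (9 / 10 : ℝ) = (Q : ℝ) ^ (9 / 10 : ℝ) * (Q : ℝ) ^ (9 / 10 : ℝ) := by
      rw [sq, Real.mul_rpow (by positivity) (by positivity)]
    rw [h2]
    have h3 : (F.card * F.card : ℝ) ≤
        (49 * (Q : ℝ) ^ (9 / 10 : ℝ)) * (49 * (Q : ℝ) ^ (9 / 10 : ℝ)) := by gcongr
    linarith
  · rintro t ⟨ht, ht5, ht10⟩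
    have h5 : (2.2 : ℝ) ≤ √5 := Real.le_sqrt_of_sq_le (by norm_num)
    have ht2 : t ^ 2 < 10 := by
      have := Real.sq_sqrt (show (0 : ℝ) ≤ 10 by norm_num)
      nlinarith
    obtain ⟨k, x, y, h, hd⟩ := exists_isTailPair_of_mem ht
      (ε := min (1 / (Q : ℝ) ^ 2) (1 / 10)) (by positivity)
      (by linarith [min_le_right (1 / (Q : ℝ) ^ 2) (1 / 10)])
    have hk := h.eq_one_or_two ht2
    obtain ⟨z, hz, hxz⟩ := hcov k hk x ⟨t, y, ht2, h⟩
    obtain ⟨w, hw, hyw⟩ := hcov k hk y ⟨t, x, ht2, h.symm⟩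
    refine ⟨k + z + w, Finset.mem_image.2 ⟨(k, z, w), by simp [hz, hw, hk], rfl⟩, ?_⟩
    have hd' := hd.trans (min_le_left _ _)
    rw [show t - (k + z + w) = (t - (k + x + y)) + (x - z) + (y - w) by ring,
      show 3 / (Q : ℝ) ^ 2 = 1 / (Q : ℝ) ^ 2 + 1 / (Q : ℝ) ^ 2 + 1 / (Q : ℝ) ^ 2 by ring]
    exact (abs_add_three _ _ _).trans (by gcongr)

/-- **Hall (1971)**: the portion `M ∩ [√5, √10]` of the Markov spectrum has Hausdorff
dimension at most `0.93`; in particular it has Lebesgue measure zero. -/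
theorem hall_dimension_bound :
    dimH (MarkovSpectrum ∩ Set.Icc (Real.sqrt 5) (Real.sqrt 10)) ≤ ENNReal.ofReal 0.93 ∧
    MeasureTheory.volume (MarkovSpectrum ∩ Set.Icc (Real.sqrt 5) (Real.sqrt 10)) = 0 := by
  have hE : dimH (MarkovSpectrum ∩ Set.Ico √5 √10) ≤ ((9 / 10 : NNReal) : ℝ≥0∞) :=
    dimH_le_of_hausdorffMeasure_ne_top (by
      simpa using hausdorffMeasure_ne_top_of_cover (by norm_num)
        exists_finset_cover_markovSpectrum)
  have hsub : MarkovSpectrum ∩ Set.Icc √5 √10 ⊆ (MarkovSpectrum ∩ Set.Ico √5 √10) ∪ {√10} := by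
    rintro t ⟨ht, h5, h10⟩
    rcases h10.lt_or_eq with h | h
    · exact Or.inl ⟨ht, h5, h⟩
    · exact Or.inr h
  have hdim : dimH (MarkovSpectrum ∩ Set.Icc √5 √10) ≤ ((9 / 10 : NNReal) : ℝ≥0∞) := by
    refine (dimH_mono hsub).trans ?_
    rw [dimH_union, dimH_singleton]
    exact max_le hE zero_le
  refine ⟨hdim.trans ?_, ?_⟩
  · rw [ENNReal.ofReal, ENNReal.coe_le_coe, Real.le_toNNReal_iff_coe_le (by norm_num)]
    push_cast
    norm_num
  · have hlt : dimH (MarkovSpectrum ∩ Set.Icc √5 √10) < ((1 : NNReal) : ℝ≥0∞) := by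
      refine hdim.trans_lt (ENNReal.coe_lt_coe.2 ?_)
      rw [← NNReal.coe_lt_coe]
      push_cast
      norm_num
    have := hausdorffMeasure_of_dimH_lt hlt
    rwa [NNReal.coe_one, MeasureTheory.hausdorffMeasure_real] at this
end

section
/- The Hausdorff dimension of (M ∖ L) ∩ [√10, √12] is strictly less than 0.706094; in particular it is less than 0.93. -/
open scoped ENNReal

/-- The distance from a real number to the nearest integer. -/
noncomputable def distNearestInt (x : ℝ) : ℝ := |x - round x|

/-- The best constant of Diophantine approximation of `α`,
`ℓ(α) = limsup_{q → ∞} 1 / (q ⬝ ‖q α‖) ∈ [0, ∞]`. -/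
noncomputable def lagrangeVal (α : ℝ) : ℝ≥0∞ :=
  Filter.limsup (fun q : ℕ => ENNReal.ofReal (1 / (q * distNearestInt (q * α)))) Filter.atTop

/-- The Lagrange spectrum: the set of finite values `ℓ(α)` over irrational `α`. -/
def LagrangeSpectrum : Set ℝ :=
  {t | ∃ α : ℝ, Irrational α ∧ lagrangeVal α ≠ ⊤ ∧ (lagrangeVal α).toReal = t}

open scoped NNReal

/-- All terms of the sequence are `1` or `2`. -/
def IsDig (s : ℕ → ℕ) : Prop := ∀ n, s n = 1 ∨ s n = 2

/-- The finite continued fraction `[0; s 0, …, s (n - 1) + 1 / 2]`. -/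
noncomputable def cfApprox : ℕ → (ℕ → ℕ) → ℝ
  | 0, _ => 1 / 2
  | n + 1, s => 1 / (s 0 + cfApprox n (fun k => s (k + 1)))

/-- The infinite continued fraction `[0; s 0, s 1, …]`. -/
noncomputable def cf (s : ℕ → ℕ) : ℝ := Filter.atTop.limUnder (fun n => cfApprox n s)

lemma IsDig.tail {s : ℕ → ℕ} (hs : IsDig s) : IsDig (fun k => s (k + 1)) := fun n => hs (n + 1)

lemma IsDig.cast {s : ℕ → ℕ} (hs : IsDig s) (n : ℕ) : (s n : ℝ) = 1 ∨ (s n : ℝ) = 2 := by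
  rcases hs n with h | h <;> simp [h]

lemma inv_digit_add_mem {d x : ℝ} (hd : d = 1 ∨ d = 2) (hx : x ∈ Set.Icc (4 / 11 : ℝ) (11 / 15)) :
    1 / (d + x) ∈ Set.Icc (4 / 11 : ℝ) (11 / 15) := by
  obtain ⟨h1, h2⟩ := hx
  rcases hd with rfl | rfl <;> constructor
  all_goals first
    | (rw [div_le_div_iff₀ (by linarith) (by linarith)]; linarith)

lemma abs_inv_sub_inv_le {d x y : ℝ} (hd : 1 ≤ d) (hx : 4 / 11 ≤ x) (hy : 4 / 11 ≤ y) :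
    |1 / (d + x) - 1 / (d + y)| ≤ 3 / 5 * |x - y| := by
  have h1 : 0 < d + x := by linarith
  have h2 : 0 < d + y := by linarith
  have : 1 / (d + x) - 1 / (d + y) = (y - x) / ((d + x) * (d + y)) := by
    field_simp; ring
  rw [this, abs_div, abs_of_pos (mul_pos h1 h2), abs_sub_comm y x, div_le_iff₀ (mul_pos h1 h2)]
  have h3 : (15 / 11 : ℝ) * (15 / 11) ≤ (d + x) * (d + y) := by
    apply mul_le_mul <;> linarith
  nlinarith [abs_nonneg (x - y)]

lemma cfApprox_mem {s : ℕ → ℕ} (hs : IsDig s) (n : ℕ) :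
    cfApprox n s ∈ Set.Icc (4 / 11 : ℝ) (11 / 15) := by
  induction n generalizing s with
  | zero => simp only [cfApprox]; constructor <;> norm_num
  | succ n ih => exact inv_digit_add_mem (hs.cast 0) (ih hs.tail)

lemma IsDig.one_le_cast {s : ℕ → ℕ} (hs : IsDig s) (n : ℕ) : (1 : ℝ) ≤ s n := by
  rcases hs.cast n with h | h <;> rw [h]; norm_num

lemma abs_cfApprox_sub_le {s : ℕ → ℕ} (hs : IsDig s) (n : ℕ) :
    |cfApprox n s - cfApprox (n + 1) s| ≤ 1 * (3 / 5 : ℝ) ^ n := by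
  induction n generalizing s with
  | zero =>
    obtain ⟨h1, h2⟩ := cfApprox_mem hs 0
    obtain ⟨h3, h4⟩ := cfApprox_mem hs 1
    rw [abs_le]
    constructor <;> norm_num <;> linarith
  | succ n ih =>
    calc _ ≤ 3 / 5 * |cfApprox n (fun k => s (k + 1)) - cfApprox (n + 1) (fun k => s (k + 1))| :=
          abs_inv_sub_inv_le (hs.one_le_cast 0) (cfApprox_mem hs.tail _).1 (cfApprox_mem hs.tail _).1
      _ ≤ 3 / 5 * (1 * (3 / 5) ^ n) := by gcongr; exact ih hs.tail
      _ = _ := by ring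

lemma tendsto_cfApprox {s : ℕ → ℕ} (hs : IsDig s) :
    Filter.Tendsto (fun n => cfApprox n s) Filter.atTop (nhds (cf s)) := by
  apply CauchySeq.tendsto_limUnder
  apply cauchySeq_of_le_geometric (3 / 5 : ℝ) 1 (by norm_num)
  intro n
  rw [Real.dist_eq]
  exact abs_cfApprox_sub_le hs n

lemma cf_mem {s : ℕ → ℕ} (hs : IsDig s) : cf s ∈ Set.Icc (4 / 11 : ℝ) (11 / 15) :=
  isClosed_Icc.mem_of_tendsto (tendsto_cfApprox hs) (Filter.Eventually.of_forall (cfApprox_mem hs))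

lemma cf_eq {s : ℕ → ℕ} (hs : IsDig s) : cf s = 1 / (s 0 + cf (fun k => s (k + 1))) := by
  have h1 := (tendsto_cfApprox hs).comp (Filter.tendsto_add_atTop_nat 1)
  have h0 := (cf_mem hs.tail).1
  have h2 : Filter.Tendsto (fun n => 1 / ((s 0 : ℝ) + cfApprox n (fun k => s (k + 1)))) Filter.atTop
      (nhds (1 / (s 0 + cf (fun k => s (k + 1))))) := by
    apply Filter.Tendsto.div tendsto_const_nhds (tendsto_const_nhds.add (tendsto_cfApprox hs.tail))
    have := hs.one_le_cast 0
    linarith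
  exact tendsto_nhds_unique h1 h2

lemma cf_pos {s : ℕ → ℕ} (hs : IsDig s) : 0 < cf s := by linarith [(cf_mem hs).1]

lemma abs_cf_sub_le {s s' : ℕ → ℕ} (hs : IsDig s) (hs' : IsDig s') (n : ℕ)
    (h : ∀ k < n, s k = s' k) : |cf s - cf s'| ≤ (3 / 5 : ℝ) ^ n := by
  induction n generalizing s s' with
  | zero =>
    have h1 := cf_mem hs
    have h2 := cf_mem hs'
    rw [abs_le]
    constructor <;> norm_num <;> linarith [h1.1, h1.2, h2.1, h2.2]
  | succ n ih =>
    rw [cf_eq hs, cf_eq hs', ← h 0 (by omega)]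
    calc _ ≤ 3 / 5 * |cf (fun k => s (k + 1)) - cf (fun k => s' (k + 1))| :=
          abs_inv_sub_inv_le (hs.one_le_cast 0) (cf_mem hs.tail).1 (cf_mem hs'.tail).1
      _ ≤ 3 / 5 * (3 / 5) ^ n := by
          gcongr; exact ih hs.tail hs'.tail (fun k hk => h (k + 1) (by omega))
      _ = _ := by ring

/-- A sequence of numbers in `[0, 1]` related by the Gauss map with digits `s` starts with `cf s`. -/
lemma eq_cf_of_recurrence {s : ℕ → ℕ} (hs : IsDig s) {z : ℕ → ℝ} (h0 : ∀ n, 0 ≤ z n)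
    (h1 : ∀ n, z n ≤ 1) (hz : ∀ n, z n = 1 / (s n + z (n + 1))) : z 0 = cf s := by
  have key : ∀ n : ℕ, ∀ s : ℕ → ℕ, ∀ z : ℕ → ℝ, IsDig s → (∀ n, 0 ≤ z n) → (∀ n, z n ≤ 1) →
      (∀ n, z n = 1 / (s n + z (n + 1))) → |z 0 - cf s| ≤ (11 / 15 : ℝ) ^ n := by
    intro n
    induction n with
    | zero =>
      intro s z hs h0 h1 _
      have := cf_mem hs
      rw [abs_le]
      constructor <;> norm_num <;> linarith [h0 0, h1 0, this.1, this.2]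
    | succ n ih =>
      intro s z hs h0 h1 hz
      have hd := hs.one_le_cast 0
      have hc := (cf_mem hs.tail).1
      have e := ih (fun k => s (k + 1)) (fun k => z (k + 1)) hs.tail (fun n => h0 _) (fun n => h1 _)
        (fun n => hz _)
      rw [hz 0, cf_eq hs]
      have p1 : 0 < (s 0 : ℝ) + z (0 + 1) := by linarith [h0 (0 + 1)]
      have p2 : 0 < (s 0 : ℝ) + cf (fun k => s (k + 1)) := by linarith
      have : 1 / ((s 0 : ℝ) + z (0 + 1)) - 1 / (s 0 + cf (fun k => s (k + 1))) =
          (cf (fun k => s (k + 1)) - z (0 + 1)) /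
            ((s 0 + z (0 + 1)) * (s 0 + cf (fun k => s (k + 1)))) := by
        field_simp; ring
      rw [this, abs_div, abs_of_pos (mul_pos p1 p2), abs_sub_comm, div_le_iff₀ (mul_pos p1 p2)]
      have h3 : (1 : ℝ) * (15 / 11) ≤ (s 0 + z (0 + 1)) * (s 0 + cf (fun k => s (k + 1))) := by
        apply mul_le_mul <;> linarith [h0 (0 + 1)]
      calc _ ≤ (11 / 15 : ℝ) ^ n := e
        _ = (11 / 15 : ℝ) ^ (n + 1) * (1 * (15 / 11)) := by ring
        _ ≤ _ := by gcongr
  have hlim : Filter.Tendsto (fun n : ℕ => (11 / 15 : ℝ) ^ n) Filter.atTop (nhds 0) :=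
    tendsto_pow_atTop_nhds_zero_of_lt_one (by norm_num) (by norm_num)
  have := ge_of_tendsto' hlim (fun n => key n s z hs h0 h1 hz)
  exact sub_eq_zero.1 (abs_nonpos_iff.1 this)

/-- Prepending a common finite word is monotone or antitone. -/
lemma cf_mem_uIcc {s s' c : ℕ → ℕ} (hs : IsDig s) (hs' : IsDig s') (hc : IsDig c) (n : ℕ)
    (h : ∀ k < n, c k = s k) (h' : ∀ k < n, c k = s' k)
    (hn : cf (fun k => c (k + n)) ∈ Set.uIcc (cf (fun k => s (k + n))) (cf (fun k => s' (k + n)))) :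
    cf c ∈ Set.uIcc (cf s) (cf s') := by
  induction n generalizing s s' c with
  | zero => simpa using hn
  | succ n ih =>
    have := ih hs.tail hs'.tail hc.tail (fun k hk => h (k + 1) (by omega))
      (fun k hk => h' (k + 1) (by omega)) (by simpa only [add_assoc, add_comm 1] using hn)
    rw [cf_eq hs, cf_eq hs', cf_eq hc, ← h 0 (by omega), ← h' 0 (by omega)]
    have hd := hc.one_le_cast 0
    have p1 := cf_pos hs.tail
    have p2 := cf_pos hs'.tail
    have p3 := cf_pos hc.tail
    rw [Set.mem_uIcc] at this ⊢
    rcases this with ⟨u, v⟩ | ⟨u, v⟩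
    · right
      constructor <;> gcongr
    · left
      constructor <;> gcongr

/-- Comparison of continued fractions by their first digit. -/
lemma cf_le_cf_of_head_lt {s s' : ℕ → ℕ} (hs : IsDig s) (hs' : IsDig s') (h : s' 0 < s 0) :
    cf s ≤ cf s' := by
  rw [cf_eq hs, cf_eq hs']
  have p1 := (cf_mem hs.tail)
  have p2 := (cf_mem hs'.tail)
  have h1 := hs'.one_le_cast 0
  have : (s' 0 : ℝ) + 1 ≤ s 0 := by exact_mod_cast h
  apply one_div_le_one_div_of_le <;> linarith [p1.1, p2.2, p2.1]

lemma cf_le_cf_of_tail {s s' : ℕ → ℕ} (hs : IsDig s) (hs' : IsDig s') (h : s 0 = s' 0)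
    (ht : cf (fun k => s' (k + 1)) ≤ cf (fun k => s (k + 1))) : cf s ≤ cf s' := by
  rw [cf_eq hs, cf_eq hs', h]
  have p2 := (cf_mem hs'.tail).1
  have h1 := hs'.one_le_cast 0
  gcongr

/-- All terms of the bi-infinite sequence are `1` or `2`. -/
def IsBiDig (a : ℤ → ℕ) : Prop := ∀ i, a i = 1 ∨ a i = 2

/-- The terms strictly to the right of position `i`. -/
def fut (a : ℤ → ℕ) (i : ℤ) : ℕ → ℕ := fun n => a (i + 1 + n)

/-- The terms strictly to the left of position `i`, read from right to left. -/
def past (a : ℤ → ℕ) (i : ℤ) : ℕ → ℕ := fun n => a (i - 1 - n)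

/-- The Markov value `[a i; a (i + 1), …] + [0; a (i - 1), …]` at position `i`. -/
noncomputable def lam (a : ℤ → ℕ) (i : ℤ) : ℝ := a i + cf (fut a i) + cf (past a i)

/-- The reversed sequence. -/
def mirror (a : ℤ → ℕ) : ℤ → ℕ := fun i => a (-i)

section
variable {a : ℤ → ℕ}

lemma IsBiDig.fut (ha : IsBiDig a) (i : ℤ) : IsDig (fut a i) := fun _ => ha _

lemma IsBiDig.past (ha : IsBiDig a) (i : ℤ) : IsDig (past a i) := fun _ => ha _

lemma IsBiDig.mirror (ha : IsBiDig a) : IsBiDig (mirror a) := fun _ => ha _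

lemma IsBiDig.cast (ha : IsBiDig a) (i : ℤ) : (a i : ℝ) = 1 ∨ (a i : ℝ) = 2 := by
  rcases ha i with h | h <;> simp [h]

lemma fut_mirror (a : ℤ → ℕ) (i : ℤ) : fut (mirror a) i = past a (-i) := by
  funext n; simp only [fut, mirror, past]; congr 1; ring

lemma past_mirror (a : ℤ → ℕ) (i : ℤ) : past (mirror a) i = fut a (-i) := by
  funext n; simp only [fut, mirror, past]; congr 1; ring

lemma lam_mirror (a : ℤ → ℕ) (i : ℤ) : lam (mirror a) i = lam a (-i) := by
  simp only [lam, fut_mirror, past_mirror, mirror]; ring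

lemma fut_tail (a : ℤ → ℕ) (i : ℤ) (m : ℕ) : (fun k => fut a i (k + m)) = fut a (i + m) := by
  funext n; simp only [fut]; congr 1; push_cast; ring

lemma cf_fut (ha : IsBiDig a) (i : ℤ) : cf (fut a i) = 1 / (a (i + 1) + cf (fut a (i + 1))) := by
  rw [cf_eq (ha.fut i)]
  congr 3
  · simp [fut]
  · exact fut_tail a i 1

lemma cf_past (ha : IsBiDig a) (i : ℤ) :
    cf (past a (i + 1)) = 1 / (a i + cf (past a i)) := by
  rw [cf_eq (ha.past (i + 1))]
  congr 3
  · simp [past]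
  · funext n; simp only [past]; congr 1; push_cast; ring

lemma lam_le_of_one (ha : IsBiDig a) {i : ℤ} (h : a i = 1) : lam a i ≤ 3.157 := by
  have h1 := (cf_mem (ha.fut i)).2
  have h2 := (cf_mem (ha.past i)).2
  simp only [lam, h]; norm_num at *; linarith

lemma lam_le_of_succ (ha : IsBiDig a) {i : ℤ} (h : a (i + 1) = 2) : lam a i ≤ 3.157 := by
  have h1 := (cf_mem (ha.fut (i + 1))).1
  have h2 := (cf_mem (ha.past i)).2
  have h3 : cf (fut a i) ≤ 11 / 26 := by
    rw [cf_fut ha, h, div_le_div_iff₀ (by positivity) (by norm_num)]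
    push_cast; linarith
  simp only [lam]
  rcases ha.cast i with h | h <;> rw [h] <;> norm_num at * <;> linarith

lemma lam_le_of_pred (ha : IsBiDig a) {i : ℤ} (h : a (i - 1) = 2) : lam a i ≤ 3.157 := by
  have := lam_le_of_succ ha.mirror (i := -i) (by rw [← h]; exact congrArg a (by ring))
  rwa [lam_mirror, neg_neg] at this

lemma sqrt_ten_gt : (3.157 : ℝ) ≤ √10 := by
  apply Real.le_sqrt_of_sq_le; norm_num

/-- Sequences agreeing near `i` have close values at `i`. -/
lemma abs_lam_sub_le {c : ℤ → ℕ} (ha : IsBiDig a) (hc : IsBiDig c) (i : ℤ) (m n : ℕ)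
    (h : ∀ j, i - m ≤ j → j ≤ i + n → a j = c j) :
    |lam a i - lam c i| ≤ (3 / 5 : ℝ) ^ m + (3 / 5 : ℝ) ^ n := by
  have h1 := abs_cf_sub_le (ha.fut i) (hc.fut i) n
    (fun k hk => h _ (by omega) (by omega))
  have h2 := abs_cf_sub_le (ha.past i) (hc.past i) m
    (fun k hk => h _ (by omega) (by omega))
  simp only [lam, h i (by omega) (by omega)]
  rw [abs_le] at *
  constructor <;> linarith [h1.1, h1.2, h2.1, h2.2]

lemma abs_lam_sub_le_left {c : ℤ → ℕ} (ha : IsBiDig a) (hc : IsBiDig c) (i : ℤ) (m : ℕ)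
    (h : ∀ j, i - m ≤ j → a j = c j) : |lam a i - lam c i| ≤ (3 / 5 : ℝ) ^ m := by
  have h2 := abs_cf_sub_le (ha.past i) (hc.past i) m
    (fun k hk => h _ (by omega))
  have h1 : fut a i = fut c i := by
    funext k; exact h _ (by omega)
  simp only [lam, h i (by omega), h1]
  rw [abs_le] at *
  constructor <;> linarith [h2.1, h2.2]

lemma abs_lam_sub_le_right {c : ℤ → ℕ} (ha : IsBiDig a) (hc : IsBiDig c) (i : ℤ) (n : ℕ)
    (h : ∀ j, j ≤ i + n → a j = c j) : |lam a i - lam c i| ≤ (3 / 5 : ℝ) ^ n := by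
  have := abs_lam_sub_le_left ha.mirror hc.mirror (-i) n (fun j hj => h _ (by omega))
  rwa [lam_mirror, lam_mirror, neg_neg] at this

end

/-- The sequence `a` can be continued to the right from position `N` so as to end in `222…`, with all
values at most `t + 2 (3 / 5) ^ N`. -/
def Connects (a : ℤ → ℕ) (t : ℝ) (N : ℕ) : Prop :=
  ∃ c : ℤ → ℕ, IsBiDig c ∧ (∀ i ≤ (N : ℤ), c i = a i) ∧ (∃ R : ℕ, ∀ i ≥ (R : ℤ), c i = 2) ∧
    ∀ i, lam c i ≤ t + 2 * (3 / 5 : ℝ) ^ N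

/-- Follow `a` up to position `n`, then `s`. -/
def glue (a : ℤ → ℕ) (n : ℤ) (s : ℕ → ℕ) : ℤ → ℕ :=
  fun i => if i ≤ n then a i else s (i - n - 1).toNat

lemma glue_of_le {a : ℤ → ℕ} {n : ℤ} {s : ℕ → ℕ} {i : ℤ} (h : i ≤ n) : glue a n s i = a i := by
  simp [glue, h]

lemma glue_of_eq {a : ℤ → ℕ} {n : ℤ} {s : ℕ → ℕ} {i : ℤ} (k : ℕ) (h : i = n + 1 + k) :
    glue a n s i = s k := by
  have h1 : ¬ i ≤ n := by omega
  have h2 : (i - n - 1).toNat = k := by omega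
  simp [glue, h1, h2]

lemma fut_glue (a : ℤ → ℕ) (n : ℤ) (s : ℕ → ℕ) : fut (glue a n s) n = s := by
  funext k; exact glue_of_eq k rfl

lemma IsBiDig.glue {a : ℤ → ℕ} (ha : IsBiDig a) {s : ℕ → ℕ} (hs : IsDig s) (n : ℤ) :
    IsBiDig (glue a n s) := by
  intro i
  unfold _root_.glue
  split_ifs
  · exact ha i
  · exact hs _

/-- If two sequences of the same bin branch at position `n + 1`, and a continuation `θ` that settles
at `2` and creates only small values lies between their continuations, then the first one connects. -/
lemma connects_of_between {a a' : ℤ → ℕ} (ha : IsBiDig a) (ha' : IsBiDig a') {t t' : ℝ}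
    (ht : √10 ≤ t) {N : ℕ} (htt : t' ≤ t + (3 / 5 : ℝ) ^ N)
    (hat : ∀ i, lam a i ≤ t) (hat' : ∀ i, lam a' i ≤ t') {n : ℕ} (hn : N ≤ n)
    (h : ∀ i : ℤ, -N ≤ i → i ≤ n → a i = a' i) {θ : ℕ → ℕ} (hθ : IsDig θ)
    (hb : cf θ ∈ Set.uIcc (cf (fut a n)) (cf (fut a' n)))
    (hsmall : ∀ k, θ k = 1 ∨ θ (k + 1) = 2 ∨ ∃ j, k = j + 1 ∧ θ j = 2) (hend : ∃ R, ∀ k ≥ R, θ k = 2) :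
    Connects a t N := by
  have hc : IsBiDig (glue a n θ) := ha.glue hθ n
  have hf' := ha'.fut n
  have hh : IsBiDig (glue a n (fut a' n)) := ha.glue hf' n
  have hpow : ∀ {k : ℕ}, N ≤ k → (3 / 5 : ℝ) ^ k ≤ (3 / 5 : ℝ) ^ N := fun hk =>
    pow_le_pow_of_le_one (by norm_num) (by norm_num) hk
  have hp : (0 : ℝ) < (3 / 5 : ℝ) ^ N := by positivity
  refine ⟨glue a n θ, hc, fun i hi => glue_of_le (by omega), ?_, fun i => ?_⟩
  · obtain ⟨R, hR⟩ := hend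
    refine ⟨n + 1 + R, fun i hi => ?_⟩
    rw [glue_of_eq (i - n - 1).toNat (by omega)]
    exact hR _ (by omega)
  rcases lt_trichotomy i 0 with hi | hi | hi
  · have := abs_lam_sub_le_right hc ha i N (fun j hj => glue_of_le (by omega))
    linarith [(abs_le.1 this).2, hat i]
  all_goals
    by_cases hin : i ≤ n
    · have hfut : cf (fut (glue a n θ) i) ∈ Set.uIcc (cf (fut a i))
          (cf (fut (glue a n (fut a' n)) i)) := by
        refine cf_mem_uIcc (ha.fut i) (hh.fut i) (hc.fut i) (n - i).toNat ?_ ?_ ?_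
        · intro k hk; exact glue_of_le (by omega)
        · intro k hk
          simp only [fut]
          rw [glue_of_le (by omega), glue_of_le (by omega)]
        · rw [fut_tail, fut_tail, fut_tail]
          have : i + ((n - i).toNat : ℤ) = n := by omega
          rwa [this, fut_glue, fut_glue]
      have hpast : past (glue a n θ) i = past a i := by
        funext k; exact glue_of_le (by omega)
      have hpast' : past (glue a n (fut a' n)) i = past a i := by
        funext k; exact glue_of_le (by omega)
      have hd : glue a n θ i = a i := glue_of_le hin
      have hd' : glue a n (fut a' n) i = a i := glue_of_le hin
      have h1 : lam (glue a n (fut a' n)) i ≤ t' + (3 / 5 : ℝ) ^ N := by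
        have := abs_lam_sub_le_left hh ha' i N (fun j hj => ?_)
        · linarith [(abs_le.1 this).2, hat' i]
        · by_cases hj' : j ≤ n
          · rw [glue_of_le hj']; exact h _ (by omega) hj'
          · rw [glue_of_eq (j - n - 1).toNat (by omega)]
            simp only [fut]; congr 1; omega
      have h2 := hat i
      simp only [lam, hpast, hpast', hd, hd'] at *
      rcases Set.mem_uIcc.1 hfut with hu | hu <;> linarith [hu.1, hu.2]
    · have : lam (glue a n θ) i ≤ 3.157 := by
        have e : glue a n θ i = θ (i - n - 1).toNat := glue_of_eq _ (by omega)
        have e' : glue a n θ (i + 1) = θ ((i - n - 1).toNat + 1) := glue_of_eq _ (by push_cast; omega)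
        rcases hsmall (i - n - 1).toNat with h1 | h1 | ⟨j, hj, h1⟩
        · exact lam_le_of_one hc (e.trans h1)
        · exact lam_le_of_succ hc (e'.trans h1)
        · exact lam_le_of_pred hc ((glue_of_eq j (by omega)).trans h1)
      linarith [sqrt_ten_gt]

/-- The sequence `1, 1, 2, 2, 2, …`. -/
def thetaOne : ℕ → ℕ := fun k => if k < 2 then 1 else 2

/-- The sequence `2, 2, 1, 2, 2, 2, …`. -/
def thetaTwo : ℕ → ℕ := fun k => if k = 2 then 1 else 2

lemma isDig_thetaOne : IsDig thetaOne := fun n => by unfold thetaOne; split_ifs <;> simp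

lemma isDig_thetaTwo : IsDig thetaTwo := fun n => by unfold thetaTwo; split_ifs <;> simp

lemma cf_thetaOne_le {s : ℕ → ℕ} (hs : IsDig s) (h0 : s 0 = 1) (h : ¬ (s 1 = 1 ∧ s 2 = 2)) :
    cf thetaOne ≤ cf s := by
  have hθ := isDig_thetaOne
  refine cf_le_cf_of_tail hθ hs (by simp [thetaOne, h0]) ?_
  rcases hs 1 with h1 | h1
  · have h2 : s 2 = 1 := by rcases hs 2 with h2 | h2 <;> simp_all
    refine cf_le_cf_of_tail hs.tail hθ.tail (by simp [thetaOne, h1]) ?_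
    exact cf_le_cf_of_head_lt hθ.tail.tail hs.tail.tail (by simp [thetaOne, h2])
  · exact cf_le_cf_of_head_lt hs.tail hθ.tail (by simp [thetaOne, h1])

lemma le_cf_thetaTwo {s : ℕ → ℕ} (hs : IsDig s) (h0 : s 0 = 2)
    (h : ¬ (s 1 = 2 ∧ s 2 = 1 ∧ s 3 = 2)) : cf s ≤ cf thetaTwo := by
  have hθ := isDig_thetaTwo
  refine cf_le_cf_of_tail hs hθ (by simp [thetaTwo, h0]) ?_
  rcases hs 1 with h1 | h1
  · exact cf_le_cf_of_head_lt hθ.tail hs.tail (by simp [thetaTwo, h1])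
  refine cf_le_cf_of_tail hθ.tail hs.tail (by simp [thetaTwo, h1]) ?_
  rcases hs 2 with h2 | h2
  · have h3 : s 3 = 1 := by rcases hs 3 with h3 | h3 <;> simp_all
    refine cf_le_cf_of_tail hs.tail.tail hθ.tail.tail (by simp [thetaTwo, h2]) ?_
    exact cf_le_cf_of_head_lt hθ.tail.tail.tail hs.tail.tail.tail (by simp [thetaTwo, h3])
  · exact cf_le_cf_of_head_lt hs.tail.tail hθ.tail.tail (by simp [thetaTwo, h2])

/-- Two sequences of the same bin that do not connect and branch at `n + 1` continue with `112` and
`2212` respectively. -/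
lemma forced_of_branch {a a' : ℤ → ℕ} (ha : IsBiDig a) (ha' : IsBiDig a') {t t' : ℝ}
    (ht : √10 ≤ t) {N : ℕ} (htt : t' ≤ t + (3 / 5 : ℝ) ^ N)
    (hat : ∀ i, lam a i ≤ t) (hat' : ∀ i, lam a' i ≤ t') (hna : ¬ Connects a t N)
    {n : ℕ} (hn : N ≤ n) (h : ∀ i : ℤ, -N ≤ i → i ≤ n → a i = a' i)
    (h1 : fut a n 0 = 1) (h2 : fut a' n 0 = 2) :
    (fut a n 1 = 1 ∧ fut a n 2 = 2) ∧ (fut a' n 1 = 2 ∧ fut a' n 2 = 1 ∧ fut a' n 3 = 2) := by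
  constructor
  · by_contra hcon
    refine hna (connects_of_between ha ha' ht htt hat hat' hn h isDig_thetaOne ?_ ?_ ⟨2, ?_⟩)
    · refine Set.mem_uIcc.2 (Or.inr ⟨?_, cf_thetaOne_le (ha.fut n) h1 hcon⟩)
      exact cf_le_cf_of_head_lt (ha'.fut n) isDig_thetaOne (by simp [thetaOne, h2])
    · intro k; unfold thetaOne; split_ifs <;> simp; omega
    · intro k hk; unfold thetaOne; split_ifs <;> omega
  · by_contra hcon
    refine hna (connects_of_between ha ha' ht htt hat hat' hn h isDig_thetaTwo ?_ ?_ ⟨3, ?_⟩)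
    · refine Set.mem_uIcc.2 (Or.inr ⟨le_cf_thetaTwo (ha'.fut n) h2 hcon, ?_⟩)
      exact cf_le_cf_of_head_lt isDig_thetaTwo (ha.fut n) (by simp [thetaTwo, h1])
    · rintro (_ | _ | k)
      · exact Or.inr (Or.inl rfl)
      · exact Or.inr (Or.inr ⟨0, rfl, rfl⟩)
      · exact Or.inr (Or.inl (if_neg (by omega)))
    · intro k hk; unfold thetaTwo; split_ifs <;> omega

/-- Denominators of two consecutive convergents of `[0; s 0, s 1, …]`. -/
noncomputable def denoms (s : ℕ → ℕ) : ℕ → ℝ × ℝ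
  | 0 => (1, 0)
  | n + 1 => (s n * (denoms s n).1 + (denoms s n).2, (denoms s n).1)

/-- Length of the image of `[4/11, 11/15]` under `x ↦ (p + p' x) / (q + q' x)`, `|p q' - p' q| = 1`. -/
noncomputable def hullLen (v : ℝ × ℝ) : ℝ :=
  (11 / 15 - 4 / 11) / ((v.1 + 4 / 11 * v.2) * (v.1 + 11 / 15 * v.2))

lemma denoms_bounds {s : ℕ → ℕ} (hs : IsDig s) (n : ℕ) :
    1 ≤ (denoms s n).1 ∧ 0 ≤ (denoms s n).2 ∧ (denoms s n).2 ≤ (denoms s n).1 := by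
  induction n with
  | zero => simp [denoms]
  | succ n ih =>
    obtain ⟨h1, h2, h3⟩ := ih
    have := hs.one_le_cast n
    simp only [denoms]
    refine ⟨?_, by linarith, ?_⟩ <;> nlinarith

lemma hullLen_pos {v : ℝ × ℝ} (h1 : 1 ≤ v.1) (h2 : 0 ≤ v.2) : 0 < hullLen v := by
  unfold hullLen
  apply div_pos (by norm_num)
  positivity

lemma exists_numers {s : ℕ → ℕ} (hs : IsDig s) (n : ℕ) :
    ∃ p p' : ℝ, |p * (denoms s n).2 - p' * (denoms s n).1| = 1 ∧
      ∀ s', IsDig s' → (∀ k < n, s' k = s k) →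
        cf s' * ((denoms s n).1 + cf (fun k => s' (k + n)) * (denoms s n).2) =
          p + cf (fun k => s' (k + n)) * p' := by
  induction n with
  | zero => exact ⟨0, 1, by simp [denoms], fun s' _ _ => by simp [denoms]⟩
  | succ n ih =>
    obtain ⟨p, p', hd, h⟩ := ih
    refine ⟨s n * p + p', p, ?_, fun s' hs' he => ?_⟩
    · rw [← hd, abs_sub_comm]; simp only [denoms]; congr 1; ring
    · have e := h s' hs' (fun k hk => he k (by omega))
      have hsh : IsDig (fun k => s' (k + n)) := fun k => hs' _
      have c := cf_eq hsh
      simp only [zero_add, he n (by omega)] at c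
      have e2 : (fun k => s' (k + 1 + n)) = fun k => s' (k + (n + 1)) := by
        funext k; congr 1; ring
      rw [e2] at c
      have hp : 0 < (s n : ℝ) + cf (fun k => s' (k + (n + 1))) := by
        have := cf_pos (s := fun k => s' (k + (n + 1))) (fun k => hs' _)
        have := hs.one_le_cast n
        linarith
      rw [c] at e
      simp only [denoms]
      field_simp at e
      linarith

lemma mul_mul_le_hull {q q' m M x y : ℝ} (hq : 0 ≤ q) (hq' : 0 ≤ q') (h0 : 0 ≤ m)
    (hmx : m ≤ x) (hxy : x ≤ y) (hyM : y ≤ M) :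
    (y - x) * ((q + m * q') * (q + M * q')) ≤ (M - m) * ((q + x * q') * (q + y * q')) := by
  have hx : 0 ≤ x := h0.trans hmx
  have hy : 0 ≤ y := hx.trans hxy
  have hM : 0 ≤ M := hy.trans hyM
  have h1 : (y - x) * (q + m * q') ≤ (y - m) * (q + x * q') := by
    nlinarith [mul_nonneg (sub_nonneg.2 hmx) (add_nonneg hq (mul_nonneg hy hq'))]
  have h2 : (y - m) * (q + M * q') ≤ (M - m) * (q + y * q') := by
    nlinarith [mul_nonneg (sub_nonneg.2 hyM) (add_nonneg hq (mul_nonneg h0 hq'))]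
  calc _ = (y - x) * (q + m * q') * (q + M * q') := by ring
    _ ≤ (y - m) * (q + x * q') * (q + M * q') := by gcongr
    _ = (y - m) * (q + M * q') * (q + x * q') := by ring
    _ ≤ (M - m) * (q + y * q') * (q + x * q') := by gcongr
    _ = _ := by ring

lemma abs_cf_sub_le_hullLen {s s₁ s₂ : ℕ → ℕ} (hs : IsDig s) (h₁ : IsDig s₁) (h₂ : IsDig s₂) (n : ℕ)
    (e₁ : ∀ k < n, s₁ k = s k) (e₂ : ∀ k < n, s₂ k = s k) :
    |cf s₁ - cf s₂| ≤ hullLen (denoms s n) := by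
  obtain ⟨p, p', hd, h⟩ := exists_numers hs n
  have c₁ := h s₁ h₁ e₁
  have c₂ := h s₂ h₂ e₂
  obtain ⟨b1, b2, -⟩ := denoms_bounds hs n
  have m₁ := cf_mem (s := fun k => s₁ (k + n)) (fun k => h₁ _)
  have m₂ := cf_mem (s := fun k => s₂ (k + n)) (fun k => h₂ _)
  generalize cf (fun k => s₁ (k + n)) = x at *
  generalize cf (fun k => s₂ (k + n)) = y at *
  generalize denoms s n = v at *
  obtain ⟨q, q'⟩ := v
  simp only [hullLen] at *
  obtain ⟨m1, m1'⟩ := m₁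
  obtain ⟨m2, m2'⟩ := m₂
  have d1 : 0 < q + x * q' := by nlinarith
  have d2 : 0 < q + y * q' := by nlinarith
  have d3 : 0 < (q + 4 / 11 * q') * (q + 11 / 15 * q') := by positivity
  have e1 : cf s₁ - cf s₂ = (p * q' - p' * q) * (y - x) / ((q + x * q') * (q + y * q')) := by
    rw [eq_div_iff (by positivity)]
    calc _ = (cf s₁ * (q + x * q')) * (q + y * q') - (cf s₂ * (q + y * q')) * (q + x * q') := by ring
      _ = _ := by rw [c₁, c₂]; ring
  rw [e1, abs_div, abs_mul, hd, one_mul, abs_of_pos (mul_pos d1 d2),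
    div_le_div_iff₀ (mul_pos d1 d2) d3]
  rcases le_total x y with hxy | hxy
  · rw [abs_of_nonneg (by linarith)]
    exact mul_mul_le_hull (by linarith) b2 (by norm_num) m1 hxy m2'
  · rw [abs_of_nonpos (by linarith), neg_sub, mul_comm (q + x * q')]
    exact mul_mul_le_hull (by linarith) b2 (by norm_num) m2 hxy m1'

/-- Covering numbers of a binary tree of sets whose sizes satisfy `ℓ₁ ^ s + ℓ₂ ^ s ≤ ℓ ^ s`. -/
lemma exists_cover_of_tree {X : Type*} (f : X → ℝ) (Node : Set X → ℝ → Prop) {s : ℝ} (hs : 0 < s)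
    (hs1 : s ≤ 1) (hpos : ∀ A l, Node A l → 0 < l)
    (hdiam : ∀ A l, Node A l → ∀ x ∈ A, ∀ y ∈ A, |f x - f y| ≤ l)
    (hsplit : ∀ A l, Node A l → (∀ x ∈ A, ∀ y ∈ A, f x = f y) ∨ ∃ A₁ A₂ l₁ l₂, A ⊆ A₁ ∪ A₂ ∧
      Node A₁ l₁ ∧ Node A₂ l₂ ∧ l₁ ≤ l / 2 ∧ l₂ ≤ l / 2 ∧ l₁ ^ s + l₂ ^ s ≤ l ^ s) :
    ∃ C : ℝ, 0 < C ∧ ∀ A l ρ, Node A l → 0 < ρ → ∃ P : Finset ℝ, (∀ x ∈ A, ∃ c ∈ P, |f x - c| ≤ ρ) ∧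
      (P.card : ℝ) ≤ max 1 (C * (l / ρ) ^ s) := by
  have hr : (1 / 2 : ℝ) ^ s < 1 := Real.rpow_lt_one (by norm_num) (by norm_num) hs
  have hr2 : (1 / 2 : ℝ) ≤ (1 / 2 : ℝ) ^ s := by
    conv_lhs => rw [← Real.rpow_one (1 / 2 : ℝ)]
    exact Real.rpow_le_rpow_of_exponent_ge (by norm_num) (by norm_num) hs1
  set r : ℝ := (1 / 2 : ℝ) ^ s with hrdef
  set C : ℝ := 1 / (1 - r) with hC
  have hC1 : 1 + C * r = C := by
    have : 1 - r ≠ 0 := by linarith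
    rw [hC]; field_simp; ring
  have hC2 : 2 ≤ C := by rw [hC, le_div_iff₀ (by linarith)]; linarith
  refine ⟨C, by linarith, ?_⟩
  have single : ∀ (A : Set X) (ρ b : ℝ), (∀ x ∈ A, ∀ y ∈ A, |f x - f y| ≤ ρ) →
      ∃ P : Finset ℝ, (∀ x ∈ A, ∃ c ∈ P, |f x - c| ≤ ρ) ∧ (P.card : ℝ) ≤ max 1 b := by
    intro A ρ b h
    rcases A.eq_empty_or_nonempty with rfl | ⟨y, hy⟩
    · exact ⟨∅, by simp, by simp⟩
    · exact ⟨{f y}, fun x hx => ⟨f y, by simp, h x hx y hy⟩, by simp⟩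
  have key : ∀ m : ℕ, ∀ A l ρ, Node A l → 0 < ρ → l ≤ ρ * 2 ^ m →
      ∃ P : Finset ℝ, (∀ x ∈ A, ∃ c ∈ P, |f x - c| ≤ ρ) ∧
        (P.card : ℝ) ≤ max 1 (C * (l / ρ) ^ s) := by
    intro m
    induction m with
    | zero =>
      intro A l ρ hA hρ hl
      exact single A ρ _ (fun x hx y hy => (hdiam A l hA x hx y hy).trans (by simpa using hl))
    | succ m ih =>
      intro A l ρ hA hρ hl
      by_cases hlρ : l ≤ ρ
      · exact single A ρ _ (fun x hx y hy => (hdiam A l hA x hx y hy).trans hlρ)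
      rcases hsplit A l hA with h | ⟨A₁, A₂, l₁, l₂, hsub, hA₁, hA₂, hl₁, hl₂, hsum⟩
      · exact single A ρ _ (fun x hx y hy => by rw [h x hx y hy]; simpa using hρ.le)
      have hm : ρ * 2 ^ (m + 1) / 2 = ρ * 2 ^ m := by ring
      obtain ⟨P₁, c₁, n₁⟩ := ih A₁ l₁ ρ hA₁ hρ (by linarith)
      obtain ⟨P₂, c₂, n₂⟩ := ih A₂ l₂ ρ hA₂ hρ (by linarith)
      classical
      refine ⟨P₁ ∪ P₂, fun x hx => ?_, ?_⟩
      · rcases hsub hx with h | h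
        · obtain ⟨c, hc, h⟩ := c₁ x h
          exact ⟨c, Finset.mem_union_left _ hc, h⟩
        · obtain ⟨c, hc, h⟩ := c₂ x h
          exact ⟨c, Finset.mem_union_right _ hc, h⟩
      have p := hpos _ _ hA
      have p₁ := hpos _ _ hA₁
      have p₂ := hpos _ _ hA₂
      have hcard : ((P₁ ∪ P₂).card : ℝ) ≤ P₁.card + P₂.card := by
        exact_mod_cast Finset.card_union_le _ _
      rw [not_le] at hlρ
      have z1 : 1 ≤ (l / ρ) ^ s := Real.one_le_rpow ((one_le_div hρ).2 hlρ.le) hs.le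
      have half : ∀ l', 0 < l' → l' ≤ l / 2 → (l' / ρ) ^ s ≤ r * (l / ρ) ^ s := by
        intro l' h0 h
        rw [hrdef, ← Real.mul_rpow (by norm_num) (by positivity)]
        apply Real.rpow_le_rpow (by positivity) _ hs.le
        calc l' / ρ ≤ (l / 2) / ρ := by gcongr
          _ = _ := by ring
      have k₁ := half l₁ p₁ hl₁
      have k₂ := half l₂ p₂ hl₂
      have hadd : (l₁ / ρ) ^ s + (l₂ / ρ) ^ s ≤ (l / ρ) ^ s := by
        rw [Real.div_rpow p₁.le hρ.le, Real.div_rpow p₂.le hρ.le, Real.div_rpow p.le hρ.le, ← add_div]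
        gcongr
      refine le_trans ?_ (le_max_right _ _)
      generalize (l / ρ) ^ s = z at *
      generalize (l₁ / ρ) ^ s = z₁ at *
      generalize (l₂ / ρ) ^ s = z₂ at *
      have e : C * z = z + C * r * z := by linear_combination (-z) * hC1
      have f₁ : C * z₁ ≤ C * (r * z) := by gcongr
      have f₂ : C * z₂ ≤ C * (r * z) := by gcongr
      have f₃ : C * (z₁ + z₂) ≤ C * z := by gcongr
      have f₄ : 2 * z ≤ C * z := by gcongr
      rcases le_max_iff.1 n₁ with n₁ | n₁ <;> rcases le_max_iff.1 n₂ with n₂ | n₂ <;> linarith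
  intro A l ρ hA hρ
  obtain ⟨m, hm⟩ := pow_unbounded_of_one_lt (l / ρ) (by norm_num : (1 : ℝ) < 2)
  exact key m A l ρ hA hρ (by rw [div_lt_iff₀ hρ] at hm; linarith)

lemma denoms_congr {s s' : ℕ → ℕ} {n : ℕ} (h : ∀ k < n, s k = s' k) : denoms s n = denoms s' n := by
  induction n with
  | zero => rfl
  | succ n ih => simp only [denoms, ih (fun k hk => h k (by omega)), h n (by omega)]

lemma rpow_div_le_of_pow_le {r c : ℝ} (hr : 0 ≤ r) (hc : 0 ≤ c) {m n : ℕ} (hn : n ≠ 0)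
    (h : r ^ m ≤ c ^ n) : r ^ ((m : ℝ) / n) ≤ c := by
  rw [div_eq_mul_inv, Real.rpow_mul hr, Real.rpow_natCast]
  calc (r ^ m) ^ (n : ℝ)⁻¹ ≤ (c ^ n) ^ (n : ℝ)⁻¹ := by gcongr
    _ = c := Real.pow_rpow_inv_natCast hc hn

lemma rpow_add_rpow_le {l l₁ l₂ r₁ r₂ c₁ c₂ : ℝ} {m n : ℕ} (hn : n ≠ 0) (hl : 0 ≤ l) (h1 : 0 ≤ l₁)
    (h2 : 0 ≤ l₂) (hr1 : 0 ≤ r₁) (hr2 : 0 ≤ r₂) (hc1 : 0 ≤ c₁) (hc2 : 0 ≤ c₂)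
    (e1 : l₁ ≤ r₁ * l) (e2 : l₂ ≤ r₂ * l) (p1 : r₁ ^ m ≤ c₁ ^ n) (p2 : r₂ ^ m ≤ c₂ ^ n)
    (hc : c₁ + c₂ ≤ 1) : l₁ ^ ((m : ℝ) / n) + l₂ ^ ((m : ℝ) / n) ≤ l ^ ((m : ℝ) / n) := by
  have hs : (0 : ℝ) ≤ (m : ℝ) / n := by positivity
  have q1 := rpow_div_le_of_pow_le hr1 hc1 hn p1
  have q2 := rpow_div_le_of_pow_le hr2 hc2 hn p2
  have b1 := Real.rpow_le_rpow h1 e1 hs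
  have b2 := Real.rpow_le_rpow h2 e2 hs
  rw [Real.mul_rpow hr1 hl] at b1
  rw [Real.mul_rpow hr2 hl] at b2
  have p : 0 ≤ l ^ ((m : ℝ) / n) := Real.rpow_nonneg hl _
  nlinarith [mul_le_mul_of_nonneg_right q1 p, mul_le_mul_of_nonneg_right q2 p]

lemma hullLen_le_mul {v w : ℝ × ℝ} {r : ℝ} (hv1 : 1 ≤ v.1) (hv2 : 0 ≤ v.2) (hw1 : 1 ≤ w.1)
    (hw2 : 0 ≤ w.2) (h : (w.1 + 4 / 11 * w.2) * (w.1 + 11 / 15 * w.2) ≤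
      r * ((v.1 + 4 / 11 * v.2) * (v.1 + 11 / 15 * v.2))) : hullLen v ≤ r * hullLen w := by
  unfold hullLen
  rw [← mul_div_assoc, div_le_div_iff₀ (by positivity) (by positivity)]
  nlinarith

section
variable {q q' : ℝ}

lemma hullLen_one_le (h1 : 1 ≤ q) (h2 : 0 ≤ q') :
    hullLen (q + q', q) ≤ 1 / 2 * hullLen (q, q') := by
  apply hullLen_le_mul <;> dsimp only <;> nlinarith

lemma hullLen_two_le (h1 : 1 ≤ q) (h2 : 0 ≤ q') :
    hullLen (2 * q + q', q) ≤ 1 / 2 * hullLen (q, q') := by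
  apply hullLen_le_mul <;> dsimp only <;> nlinarith

lemma hullLen_one_add_two_le (h1 : 1 ≤ q) (h2 : 0 ≤ q') (h3 : q' ≤ q) :
    hullLen (q + q', q) ^ (((5 : ℕ) : ℝ) / (9 : ℕ)) + hullLen (2 * q + q', q) ^ (((5 : ℕ) : ℝ) / (9 : ℕ))
      ≤ hullLen (q, q') ^ (((5 : ℕ) : ℝ) / (9 : ℕ)) := by
  have p0 : 0 ≤ hullLen (q, q') := (hullLen_pos h1 h2).le
  have p1 : 0 ≤ hullLen (q + q', q) := (hullLen_pos (by dsimp only; linarith) (by dsimp only; linarith)).le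
  have p2 : 0 ≤ hullLen (2 * q + q', q) :=
    (hullLen_pos (by dsimp only; linarith) (by dsimp only; linarith)).le
  rcases le_total (2 * q') q with h | h
  · apply rpow_add_rpow_le (r₁ := 0.4232) (r₂ := 0.1746) (c₁ := 0.6205) (c₂ := 0.3795) (by norm_num)
      p0 p1 p2 (by norm_num) (by norm_num) (by norm_num) (by norm_num) _ _ (by norm_num) (by norm_num)
      (by norm_num)
    all_goals
      apply hullLen_le_mul <;> dsimp only <;>
        nlinarith [mul_nonneg h2 (sub_nonneg.2 h), mul_nonneg (sub_nonneg.2 h) (sub_nonneg.2 h)]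
  · apply rpow_add_rpow_le (r₁ := 0.3881) (r₂ := 0.1883) (c₁ := 0.6) (c₂ := 0.4) (by norm_num)
      p0 p1 p2 (by norm_num) (by norm_num) (by norm_num) (by norm_num) _ _ (by norm_num) (by norm_num)
      (by norm_num)
    all_goals
      apply hullLen_le_mul <;> dsimp only <;>
        nlinarith [mul_nonneg h2 (sub_nonneg.2 h), mul_nonneg (sub_nonneg.2 h) (sub_nonneg.2 h),
          mul_nonneg (sub_nonneg.2 h3) (sub_nonneg.2 h)]

lemma hullLen_word_112_le (h1 : 1 ≤ q) (h2 : 0 ≤ q') (h3 : q' ≤ q) :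
    hullLen (5 * q + 3 * q', 2 * q + q') ≤ 0.0271 * hullLen (q, q') := by
  apply hullLen_le_mul <;> dsimp only <;>
    nlinarith [h3, mul_nonneg h2 (sub_nonneg.2 h3)]

lemma hullLen_word_2212_le (h1 : 1 ≤ q) (h2 : 0 ≤ q') (h3 : q' ≤ q) :
    hullLen (19 * q + 8 * q', 7 * q + 3 * q') ≤ 0.00226 * hullLen (q, q') := by
  apply hullLen_le_mul <;> dsimp only <;>
    nlinarith [mul_nonneg h2 (sub_nonneg.2 h3), mul_nonneg (sub_nonneg.2 h3) (sub_nonneg.2 h3)]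

end

lemma hullLen_denoms_succ_le {s : ℕ → ℕ} (hs : IsDig s) (n : ℕ) :
    hullLen (denoms s (n + 1)) ≤ 1 / 2 * hullLen (denoms s n) := by
  obtain ⟨h1, h2, -⟩ := denoms_bounds hs n
  simp only [denoms]
  rcases hs.cast n with h | h <;> rw [h]
  · rw [one_mul]; exact hullLen_one_le h1 h2
  · exact hullLen_two_le h1 h2

lemma hullLen_denoms_pos {s : ℕ → ℕ} (hs : IsDig s) (n : ℕ) : 0 < hullLen (denoms s n) :=
  hullLen_pos (denoms_bounds hs n).1 (denoms_bounds hs n).2.1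

lemma hullLen_denoms_anti {s : ℕ → ℕ} (hs : IsDig s) {m n : ℕ} (h : m ≤ n) :
    hullLen (denoms s n) ≤ hullLen (denoms s m) := by
  induction n, h using Nat.le_induction with
  | base => rfl
  | succ n _ ih => linarith [hullLen_denoms_succ_le hs n, hullLen_denoms_pos hs n]

/-- `A` consists of sequences of the family `K` with a common prefix whose interval has length `l`. -/
def CylinderNode (K A : Set (ℕ → ℕ)) (l : ℝ) : Prop :=
  ∃ s n, IsDig s ∧ A ⊆ K ∧ (∀ x ∈ A, ∀ k < n, x k = s k) ∧ l = hullLen (denoms s n)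

lemma CylinderNode.pos {K A : Set (ℕ → ℕ)} {l : ℝ} (h : CylinderNode K A l) : 0 < l := by
  obtain ⟨s, n, hs, -, -, rfl⟩ := h
  exact hullLen_denoms_pos hs n

lemma CylinderNode.diam_le {K A : Set (ℕ → ℕ)} (hK : ∀ x ∈ K, IsDig x) {l : ℝ}
    (h : CylinderNode K A l) : ∀ x ∈ A, ∀ y ∈ A, |cf x - cf y| ≤ l := by
  obtain ⟨s, n, hs, hA, he, rfl⟩ := h
  exact fun x hx y hy => abs_cf_sub_le_hullLen hs (hK x (hA hx)) (hK y (hA hy)) n (he x hx) (he y hy)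

lemma cylinderNode_self {K : Set (ℕ → ℕ)} : CylinderNode K K (hullLen (1, 0)) :=
  ⟨fun _ => 1, 0, fun _ => Or.inl rfl, subset_rfl, by simp, rfl⟩

/-- The set of values has covering numbers `O(ρ ^ (-s))`. -/
def HasBoxBound (S : Set ℝ) (s : ℝ) : Prop :=
  ∃ C : ℝ, 0 < C ∧ ∀ ρ : ℝ, 0 < ρ → ρ ≤ 1 → ∃ P : Finset ℝ, (∀ x ∈ S, ∃ c ∈ P, |x - c| ≤ ρ) ∧
    (P.card : ℝ) ≤ C * ρ ^ (-s)

lemma hasBoxBound_of_split {K : Set (ℕ → ℕ)} (hK : ∀ x ∈ K, IsDig x) {s : ℝ} (hs : 0 < s)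
    (hs1 : s ≤ 1)
    (hsplit : ∀ A l, CylinderNode K A l → (∀ x ∈ A, ∀ y ∈ A, cf x = cf y) ∨ ∃ A₁ A₂ l₁ l₂,
      A ⊆ A₁ ∪ A₂ ∧ CylinderNode K A₁ l₁ ∧ CylinderNode K A₂ l₂ ∧ l₁ ≤ l / 2 ∧ l₂ ≤ l / 2 ∧
      l₁ ^ s + l₂ ^ s ≤ l ^ s) : HasBoxBound (cf '' K) s := by
  obtain ⟨C, hC, h⟩ := exists_cover_of_tree cf (CylinderNode K) hs hs1 (fun A l => CylinderNode.pos)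
    (fun A l => CylinderNode.diam_le hK) hsplit
  have hp : 0 < hullLen (1, 0) := cylinderNode_self (K := K).pos
  refine ⟨max 1 (C * hullLen (1, 0) ^ s), by positivity, fun ρ hρ hρ1 => ?_⟩
  obtain ⟨P, hP, hcard⟩ := h K _ ρ cylinderNode_self hρ
  refine ⟨P, by simpa using hP, hcard.trans (max_le ?_ ?_)⟩
  · have : 1 ≤ ρ ^ (-s) := Real.one_le_rpow_of_pos_of_le_one_of_nonpos hρ hρ1 (by linarith)
    nlinarith [le_max_left 1 (C * hullLen (1, 0) ^ s)]
  · rw [Real.div_rpow hp.le hρ.le, Real.rpow_neg hρ.le, div_eq_mul_inv, ← mul_assoc]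
    gcongr
    exact le_max_right _ _

lemma hasBoxBound_all : HasBoxBound (cf '' {x | IsDig x}) (((5 : ℕ) : ℝ) / (9 : ℕ)) := by
  refine hasBoxBound_of_split (fun x hx => hx) (by norm_num) (by norm_num) ?_
  rintro A l ⟨s, n, hs, hA, he, rfl⟩
  obtain ⟨b1, b2, b3⟩ := denoms_bounds hs n
  have hupd : ∀ d, d = 1 ∨ d = 2 → IsDig (Function.update s n d) := by
    intro d hd k
    by_cases hk : k = n
    · subst hk; simpa using hd
    · simpa [hk] using hs k
  have hden : ∀ d, denoms (Function.update s n d) (n + 1) =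
      (d * (denoms s n).1 + (denoms s n).2, (denoms s n).1) := by
    intro d
    have : denoms (Function.update s n d) n = denoms s n :=
      denoms_congr (fun k hk => by simp [hk.ne])
    simp [denoms, this]
  have hnode : ∀ d, d = 1 ∨ d = 2 → CylinderNode {x | IsDig x} {x ∈ A | x n = d}
      (hullLen (d * (denoms s n).1 + (denoms s n).2, (denoms s n).1)) := by
    intro d hd
    refine ⟨Function.update s n d, n + 1, hupd d hd, fun x hx => hA hx.1, fun x hx k hk => ?_,
      by rw [hden]⟩
    by_cases hkn : k = n
    · subst hkn; simpa using hx.2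
    · simpa [hkn] using he x hx.1 k (by omega)
  refine Or.inr ⟨_, _, _, _, ?_, hnode 1 (Or.inl rfl), hnode 2 (Or.inr rfl), ?_, ?_, ?_⟩
  · intro x hx
    rcases hA hx n with h | h
    · exact Or.inl ⟨hx, h⟩
    · exact Or.inr ⟨hx, h⟩
  · simpa [div_eq_inv_mul] using hullLen_one_le b1 b2
  · simpa [div_eq_inv_mul] using hullLen_two_le b1 b2
  · simpa using hullLen_one_add_two_le b1 b2 b3

/-- At every branching the two continuations start with `112` and `2212`. -/
def ForcedBranching (K : Set (ℕ → ℕ)) : Prop :=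
  ∀ x ∈ K, ∀ y ∈ K, ∀ n, (∀ k < n, x k = y k) → x n = 1 → y n = 2 →
    (x (n + 1) = 1 ∧ x (n + 2) = 2) ∧ (y (n + 1) = 2 ∧ y (n + 2) = 1 ∧ y (n + 3) = 2)

lemma hasBoxBound_of_forcedBranching {K : Set (ℕ → ℕ)} (hK : ∀ x ∈ K, IsDig x)
    (hbr : ForcedBranching K) : HasBoxBound (cf '' K) (((3 : ℕ) : ℝ) / (20 : ℕ)) := by
  refine hasBoxBound_of_split hK (by norm_num) (by norm_num) ?_
  rintro A l ⟨s, n, hs, hA, he, rfl⟩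
  by_cases hall : ∀ x ∈ A, ∀ y ∈ A, cf x = cf y
  · exact Or.inl hall
  right
  have hex : ∃ m, ∃ x ∈ A, ∃ y ∈ A, x m ≠ y m := by
    by_contra! h
    exact hall (fun x hx y hy => congrArg cf (funext fun m => h m x hx y hy))
  classical
  set m := Nat.find hex with hm
  have hmin : ∀ x ∈ A, ∀ y ∈ A, ∀ k < m, x k = y k := by
    intro x hx y hy k hk
    by_contra hne
    exact Nat.find_min hex hk ⟨x, hx, y, hy, hne⟩
  have hxy : ∃ x ∈ A, ∃ y ∈ A, x m = 1 ∧ y m = 2 := by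
    obtain ⟨x, hx, y, hy, hne⟩ := Nat.find_spec hex
    rcases hK x (hA hx) m with h1 | h1 <;> rcases hK y (hA hy) m with h2 | h2
    · exact absurd (h1.trans h2.symm) hne
    · exact ⟨x, hx, y, hy, h1, h2⟩
    · exact ⟨y, hy, x, hx, h2, h1⟩
    · exact absurd (h1.trans h2.symm) hne
  obtain ⟨x, hx, y, hy, hx1, hy2⟩ := hxy
  have hnm : n ≤ m := by
    by_contra! h
    have := (he x hx m h).trans (he y hy m h).symm
    omega
  have hxd := hK x (hA hx)
  have hyd := hK y (hA hy)
  obtain ⟨b1, b2, b3⟩ := denoms_bounds hxd m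
  have hyden : denoms y m = denoms x m := denoms_congr (hmin y hy x hx)
  obtain ⟨⟨fx1, fx2⟩, fy1, fy2, fy3⟩ := hbr x (hA hx) y (hA hy) m (hmin x hx y hy) hx1 hy2
  have hlen : hullLen (denoms x m) ≤ hullLen (denoms s n) := by
    rw [← denoms_congr (he x hx)]
    exact hullLen_denoms_anti hxd hnm
  have e₁ : hullLen (denoms x (m + 3)) ≤ 0.0271 * hullLen (denoms x m) := by
    refine le_trans (le_of_eq ?_) (hullLen_word_112_le b1 b2 b3)
    simp only [denoms, hx1, fx1, fx2]
    congr 2 <;> push_cast <;> ring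
  have e₂ : hullLen (denoms y (m + 4)) ≤ 0.00226 * hullLen (denoms x m) := by
    refine le_trans (le_of_eq ?_) (hullLen_word_2212_le b1 b2 b3)
    simp only [denoms, hy2, fy1, fy2, fy3, hyden]
    congr 2 <;> push_cast <;> ring
  have p := hullLen_denoms_pos hxd m
  have p₁ := hullLen_denoms_pos hxd (m + 3)
  have p₂ := hullLen_denoms_pos hyd (m + 4)
  refine ⟨{z ∈ A | z m = 1}, {z ∈ A | z m = 2}, hullLen (denoms x (m + 3)),
    hullLen (denoms y (m + 4)), ?_, ⟨x, m + 3, hxd, fun z hz => hA hz.1, ?_, rfl⟩,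
    ⟨y, m + 4, hyd, fun z hz => hA hz.1, ?_, rfl⟩, by linarith, by linarith, ?_⟩
  · intro z hz
    rcases hK z (hA hz) m with h | h
    · exact Or.inl ⟨hz, h⟩
    · exact Or.inr ⟨hz, h⟩
  · rintro z ⟨hz, hz1⟩ k hk
    obtain ⟨⟨g1, g2⟩, -⟩ := hbr z (hA hz) y (hA hy) m (hmin z hz y hy) hz1 hy2
    rcases lt_or_ge k m with h | h
    · exact hmin z hz x hx k h
    · obtain rfl | rfl | rfl : k = m ∨ k = m + 1 ∨ k = m + 2 := by omega
      · rw [hz1, hx1]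
      · rw [g1, fx1]
      · rw [g2, fx2]
  · rintro z ⟨hz, hz2⟩ k hk
    obtain ⟨-, g1, g2, g3⟩ := hbr x (hA hx) z (hA hz) m (hmin x hx z hz) hx1 hz2
    rcases lt_or_ge k m with h | h
    · exact hmin z hz y hy k h
    · obtain rfl | rfl | rfl | rfl : k = m ∨ k = m + 1 ∨ k = m + 2 ∨ k = m + 3 := by omega
      · rw [hz2, hy2]
      · rw [g1, fy1]
      · rw [g2, fy2]
      · rw [g3, fy3]
  · exact rpow_add_rpow_le (r₁ := 0.0271) (r₂ := 0.00226) (c₁ := 0.59) (c₂ := 0.41) (by norm_num)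
      (p.le.trans hlen) p₁.le p₂.le (by norm_num) (by norm_num) (by norm_num) (by norm_num)
      (by linarith) (by linarith) (by norm_num) (by norm_num) (by norm_num)

lemma HasBoxBound.add {S T : Set ℝ} {s t : ℝ} (hS : HasBoxBound S s) (hT : HasBoxBound T t) (d : ℝ) :
    HasBoxBound {z | ∃ x ∈ S, ∃ y ∈ T, z = d + x + y} (s + t) := by
  obtain ⟨C, hC, h⟩ := hS
  obtain ⟨D, hD, k⟩ := hT
  refine ⟨C * D * (1 / 2) ^ (-(s + t)), by positivity, fun ρ hρ hρ1 => ?_⟩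
  obtain ⟨P, hP, hPc⟩ := h (1 / 2 * ρ) (by linarith) (by linarith)
  obtain ⟨Q, hQ, hQc⟩ := k (1 / 2 * ρ) (by linarith) (by linarith)
  classical
  refine ⟨(P ×ˢ Q).image (fun u => d + u.1 + u.2), ?_, ?_⟩
  · rintro z ⟨x, hx, y, hy, rfl⟩
    obtain ⟨c, hc, hxc⟩ := hP x hx
    obtain ⟨c', hc', hyc⟩ := hQ y hy
    refine ⟨d + c + c', Finset.mem_image.2 ⟨(c, c'), by simp [hc, hc'], rfl⟩, ?_⟩
    rw [abs_le] at *
    constructor <;> linarith [hxc.1, hxc.2, hyc.1, hyc.2]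
  · calc (((P ×ˢ Q).image (fun u => d + u.1 + u.2)).card : ℝ) ≤ P.card * Q.card := by
          rw [← Nat.cast_mul, ← Finset.card_product]
          exact_mod_cast Finset.card_image_le
      _ ≤ (C * (1 / 2 * ρ) ^ (-s)) * (D * (1 / 2 * ρ) ^ (-t)) := by gcongr
      _ = C * D * ((1 / 2 * ρ) ^ (-s) * (1 / 2 * ρ) ^ (-t)) := by ring
      _ = _ := by
          rw [← Real.rpow_add (by linarith), ← neg_add, Real.mul_rpow (by norm_num) hρ.le]; ring

lemma HasBoxBound.mono {S T : Set ℝ} {s : ℝ} (hT : HasBoxBound T s) (h : S ⊆ T) :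
    HasBoxBound S s := by
  obtain ⟨C, hC, k⟩ := hT
  refine ⟨C, hC, fun ρ h0 h1 => ?_⟩
  obtain ⟨P, hP, hc⟩ := k ρ h0 h1
  exact ⟨P, fun x hx => hP x (h hx), hc⟩

lemma HasBoxBound.dimH_le {S : Set ℝ} {s : ℝ≥0} (hS : HasBoxBound S s) : dimH S ≤ s := by
  obtain ⟨C, hC, h⟩ := hS
  have hρ : ∀ n : ℕ, (0 : ℝ) < 1 / ((n : ℝ) + 1) ∧ 1 / ((n : ℝ) + 1) ≤ 1 := fun n =>
    ⟨by positivity, by rw [div_le_one (by positivity)]; linarith [(n.cast_nonneg : (0 : ℝ) ≤ n)]⟩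
  choose P hP hcard using fun n : ℕ => h (1 / ((n : ℝ) + 1)) (hρ n).1 (hρ n).2
  apply dimH_le_of_hausdorffMeasure_ne_top
  have hdiam : ∀ n (c : P n), Metric.ediam (Metric.closedBall (c : ℝ) (1 / ((n : ℝ) + 1))) ≤
      ENNReal.ofReal (2 * (1 / ((n : ℝ) + 1))) := by
    intro n c
    rw [Real.closedBall_eq_Icc, Real.ediam_Icc]
    exact ENNReal.ofReal_le_ofReal (by linarith)
  have hr : Filter.Tendsto (fun n : ℕ => ENNReal.ofReal (2 * (1 / ((n : ℝ) + 1)))) Filter.atTop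
      (nhds 0) := by
    rw [← ENNReal.ofReal_zero]
    apply ENNReal.tendsto_ofReal
    simpa using (tendsto_one_div_add_atTop_nhds_zero_nat (𝕜 := ℝ)).const_mul 2
  have hle := MeasureTheory.Measure.hausdorffMeasure_le_liminf_sum (s : ℝ) S
    (fun n : ℕ => ENNReal.ofReal (2 * (1 / ((n : ℝ) + 1)))) hr
    (fun n (c : P n) => Metric.closedBall (c : ℝ) (1 / ((n : ℝ) + 1)))
    (Filter.Eventually.of_forall hdiam)
    (Filter.Eventually.of_forall fun n x hx => by
      obtain ⟨c, hc, hxc⟩ := hP n x hx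
      exact Set.mem_iUnion.2 ⟨⟨c, hc⟩, by rwa [Metric.mem_closedBall, Real.dist_eq]⟩)
  refine ne_top_of_le_ne_top (ENNReal.ofReal_ne_top (r := C * 2 ^ (s : ℝ))) (hle.trans ?_)
  refine Filter.liminf_le_of_le (by isBoundedDefault) fun b hb => ?_
  obtain ⟨n, hn⟩ := hb.exists
  refine hn.trans ?_
  calc _ ≤ ∑ _c : P n, ENNReal.ofReal (2 * (1 / ((n : ℝ) + 1))) ^ (s : ℝ) := by
        gcongr with c; exact hdiam n c
    _ = ENNReal.ofReal ((P n).card * (2 * (1 / ((n : ℝ) + 1))) ^ (s : ℝ)) := by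
        have p : 0 ≤ 2 * (1 / ((n : ℝ) + 1)) := by have := (hρ n).1; positivity
        rw [Finset.sum_const, ENNReal.ofReal_mul (p := ((P n).card : ℝ)) (by positivity),
          ENNReal.ofReal_natCast,
          ← ENNReal.ofReal_rpow_of_nonneg p s.coe_nonneg, nsmul_eq_mul, Finset.card_univ,
          Fintype.card_coe]
    _ ≤ _ := by
        apply ENNReal.ofReal_le_ofReal
        have p := (hρ n).1
        have hc := hcard n
        generalize 1 / ((n : ℝ) + 1) = ρ at p hc ⊢
        rw [Real.mul_rpow (by norm_num) p.le]
        rw [Real.rpow_neg p.le] at hc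
        calc _ ≤ (C * (ρ ^ (s : ℝ))⁻¹) * (2 ^ (s : ℝ) * ρ ^ (s : ℝ)) := by gcongr
          _ = _ := by
            have := (Real.rpow_pos_of_pos p (s : ℝ)).ne'
            field_simp

section
variable {b : ℤ → ℕ}

/-- The forward continued fraction `[b i; b (i + 1), …]`. -/
noncomputable def fwd (b : ℤ → ℕ) (i : ℤ) : ℝ := b i + cf (fut b i)

lemma fwd_eq (hb : IsBiDig b) (i : ℤ) : fwd b i = b i + 1 / fwd b (i + 1) := by
  rw [fwd, cf_fut hb, fwd]

lemma one_lt_fwd (hb : IsBiDig b) (i : ℤ) : 1 < fwd b i := by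
  have h1 := (cf_mem (hb.fut i)).1
  have h2 : (1 : ℝ) ≤ b i := by rcases hb.cast i with h | h <;> rw [h] <;> norm_num
  unfold fwd; linarith

lemma lam_eq_fwd_add (i : ℤ) : lam b i = fwd b i + cf (past b i) := rfl

lemma floor_fwd (hb : IsBiDig b) (i : ℤ) : ⌊fwd b i⌋ = b i := by
  have h1 := cf_mem (hb.fut i)
  rw [Int.floor_eq_iff]
  unfold fwd
  push_cast
  constructor <;> linarith [h1.1, h1.2]

lemma inv_fract_fwd (hb : IsBiDig b) (i : ℤ) : (Int.fract (fwd b i))⁻¹ = fwd b (i + 1) := by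
  rw [Int.fract, floor_fwd hb, fwd_eq hb i]
  simp

/-- Convergents of `fwd b i`, with the exact quality of approximation. -/
lemma convergent_fwd (hb : IsBiDig b) (n : ℕ) (i : ℤ) : ∃ P Q : ℕ, P.Coprime Q ∧ n + 1 ≤ P ∧
    1 ≤ Q ∧ n ≤ Q ∧ (fwd b i).convergent n = (P : ℚ) / Q ∧
    |P - fwd b i * Q| * (P + cf (past b i) * Q) * lam b (i + n + 1) = lam b i := by
  induction n generalizing i with
  | zero =>
    have hx := one_lt_fwd hb (i + 1)
    have hy := cf_past hb i
    have hy0 := cf_pos (hb.past (i + 1))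
    have hx1 := fwd_eq hb i
    have h1 : (0 : ℝ) < b i + cf (past b i) := by
      have := cf_pos (hb.past i); positivity
    refine ⟨b i, 1, by simp, ?_, le_rfl, by simp, by simp [Real.convergent_zero, floor_fwd hb], ?_⟩
    · rcases hb i with h | h <;> simp [h]
    · simp only [lam_eq_fwd_add, Nat.cast_zero, add_zero]
      rw [hy, hx1]
      generalize fwd b (i + 1) = x at *
      rw [show (b i : ℝ) - (b i + 1 / x) * ((1 : ℕ) : ℝ) = -(1 / x) by push_cast; ring, abs_neg,
        abs_of_pos (by positivity)]
      have : 0 < x := by linarith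
      field_simp
      push_cast
      ring
  | succ n ih =>
    obtain ⟨P, Q, hc, hP, hQ, hnQ, hconv, hval⟩ := ih (i + 1)
    have hx := one_lt_fwd hb (i + 1)
    have hy := cf_past hb i
    have hy0 := cf_pos (hb.past (i + 1))
    have hx1 := fwd_eq hb i
    have h1 : (0 : ℝ) < b i + cf (past b i) := by
      have := cf_pos (hb.past i); positivity
    have hP0 : 0 < P := by omega
    refine ⟨b i * P + Q, P, ?_, ?_, by omega, by omega, ?_, ?_⟩
    · rw [Nat.coprime_mul_right_add_left]; exact hc.symm
    · rcases hb i with h | h <;> rw [h] <;> omega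
    · rw [Real.convergent_succ, floor_fwd hb, inv_fract_fwd hb, hconv]
      have : (P : ℚ) ≠ 0 := by positivity
      push_cast
      field_simp
    · have e : i + 1 + (n : ℤ) + 1 = i + ((n + 1 : ℕ) : ℤ) + 1 := by push_cast; ring
      rw [e] at hval
      generalize lam b (i + ((n + 1 : ℕ) : ℤ) + 1) = l at *
      simp only [lam_eq_fwd_add] at hval ⊢
      rw [hx1]
      rw [hy] at hval
      generalize fwd b (i + 1) = x at *
      have hx0 : 0 < x := by linarith
      rw [show ((b i * P + Q : ℕ) : ℝ) - (b i + 1 / x) * P = -(1 / x) * (P - x * Q) by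
        push_cast; field_simp; ring, abs_mul, abs_neg, abs_of_pos (by positivity : 0 < 1 / x)]
      generalize |(P : ℝ) - x * Q| = w at *
      have : x + 1 / (b i + cf (past b i)) = w * (P * (b i + cf (past b i)) + Q) * l /
          (b i + cf (past b i)) := by
        rw [← hval]; field_simp
      have h2 : w * (P * (b i + cf (past b i)) + Q) * l =
          x * (b i + cf (past b i)) + 1 := by
        field_simp at this; linarith
      field_simp
      push_cast
      linarith

end

section
variable {b : ℤ → ℕ}

lemma lam_pos (hb : IsBiDig b) (i : ℤ) : 0 < lam b i := by
  have := one_lt_fwd hb i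
  have := cf_pos (hb.past i)
  rw [lam_eq_fwd_add]; linarith

/-- Convergents of `fwd b 0` have quality of approximation close to the values `lam b`. -/
lemma convergent_fwd_quality (hb : IsBiDig b) (n : ℕ) : ∃ P Q : ℕ, P.Coprime Q ∧ 1 ≤ Q ∧ n ≤ Q ∧
    (fwd b 0).convergent n = (P : ℚ) / Q ∧ 0 < |P - fwd b 0 * Q| ∧
    |1 / (Q * |P - fwd b 0 * Q|) - lam b ((n + 1 : ℕ) : ℤ)| ≤ 1 / ((n : ℝ) + 1) := by
  obtain ⟨P, Q, hc, hP, hQ, hn, hconv, hval⟩ := convergent_fwd hb n 0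
  refine ⟨P, Q, hc, hQ, hn, hconv, ?_⟩
  rw [zero_add] at hval
  have hl : 0 < lam b ((n + 1 : ℕ) : ℤ) := lam_pos hb _
  have hA : 0 < lam b 0 := lam_pos hb _
  have hs : P + cf (past b 0) * Q = Q * lam b 0 + (P - fwd b 0 * Q) := by
    rw [lam_eq_fwd_add]; ring
  have hy := cf_pos (hb.past 0)
  push_cast at hl ⊢
  generalize lam b ((n : ℤ) + 1) = l at *
  have hQ0 : (1 : ℝ) ≤ Q := by exact_mod_cast hQ
  have hP0 : (n : ℝ) + 1 ≤ P := by exact_mod_cast hP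
  have hn0 : (0 : ℝ) ≤ n := n.cast_nonneg
  have hD : 0 < |P - fwd b 0 * Q| := by
    rcases (abs_nonneg ((P : ℝ) - fwd b 0 * Q)).lt_or_eq with h | h
    · exact h
    · rw [← h] at hval; simp at hval; linarith
  refine ⟨hD, ?_⟩
  have hW : (n : ℝ) + 1 ≤ P + cf (past b 0) * Q := by nlinarith
  generalize P + cf (past b 0) * Q = W at *
  have hd : |(P - fwd b 0 * Q)| = |P - fwd b 0 * Q| := rfl
  generalize hs' : (P : ℝ) - fwd b 0 * Q = s at *
  have hDpos : 0 < |s| := hD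
  have key : 1 / (Q * |s|) - l = s * l / (Q * lam b 0) := by
    field_simp
    linear_combination -hval + |s| * l * hs
  rw [key, abs_div, abs_mul, abs_of_pos hl, abs_of_pos (by positivity : 0 < Q * lam b 0)]
  rw [div_le_div_iff₀ (by positivity) (by positivity), ← hval, one_mul]
  have : |s| * l * (n + 1) ≤ |s| * l * W := by gcongr
  have h2 : |s| * l * W ≤ Q * (|s| * l * W) := le_mul_of_one_le_left (by
    have : 0 ≤ W := by linarith
    positivity) hQ0
  linarith [mul_assoc (|s|) W l]

lemma irrational_fwd (hb : IsBiDig b) : Irrational (fwd b 0) := by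
  rintro ⟨r, hr⟩
  obtain ⟨n, hn⟩ := Real.exists_rat_eq_convergent (ξ := fwd b 0) (q := r) (by
    rw [← hr, sub_self, abs_zero]; have := r.pos; positivity)
  obtain ⟨P, Q, -, hQ, -, hconv, hD, -⟩ := convergent_fwd_quality hb n
  have hQ0 : (Q : ℝ) ≠ 0 := by positivity
  rw [← hr, hn, hconv] at hD
  push_cast at hD
  rw [div_mul_cancel₀ _ hQ0] at hD
  simp at hD

lemma eventually_quality_le (hb : IsBiDig b) {t : ℝ} (ht : 2 ≤ t)
    (h : ∀ ε > 0, ∀ᶠ n : ℕ in Filter.atTop, lam b n ≤ t + ε) {ε : ℝ} (hε : 0 < ε) :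
    ∀ᶠ q : ℕ in Filter.atTop, 1 / (q * distNearestInt (q * fwd b 0)) ≤ t + ε := by
  obtain ⟨n₀, hn₀⟩ := Filter.eventually_atTop.1 (h (ε / 2) (by positivity))
  obtain ⟨n₁, hn₁⟩ := exists_nat_one_div_lt (by positivity : 0 < ε / 2)
  have hfar : ∀ n ∈ Finset.range (max n₀ n₁), ∀ᶠ q : ℕ in Filter.atTop,
      ¬ |fwd b 0 - (fwd b 0).convergent n| < 1 / (q : ℝ) := by
    intro n _
    have hpos : 0 < |fwd b 0 - (fwd b 0).convergent n| :=
      abs_pos.2 (sub_ne_zero.2 ((irrational_fwd hb).ne_rat _))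
    filter_upwards [tendsto_one_div_atTop_nhds_zero_nat.eventually (gt_mem_nhds hpos)] with q hq
    exact not_lt.2 hq.le
  filter_upwards [(Filter.eventually_all_finset _).2 hfar, Filter.eventually_ge_atTop 1] with q hq hq1
  by_contra! hlt
  have hq0 : (1 : ℝ) ≤ q := by exact_mod_cast hq1
  set α := fwd b 0 with hα
  set p := round (q * α) with hp
  have hdist : distNearestInt (q * α) = |q * α - p| := rfl
  have hDpos : 0 < |q * α - p| :=
    abs_pos.2 (sub_ne_zero.2 (((irrational_fwd hb).natCast_mul (by omega)).ne_int _))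
  rw [hdist, lt_div_iff₀ (by positivity)] at hlt
  set r : ℚ := p / q with hr
  have hrα : |α - r| = |q * α - p| / q := by
    rw [hr, ← abs_of_pos (by positivity : (0 : ℝ) < q), ← abs_div, abs_of_pos (by positivity : (0 : ℝ) < q)]
    congr 1
    push_cast
    field_simp
  have hden : (r.den : ℝ) ≤ q := by
    have h1 : (r.den : ℤ) ∣ q := by
      have := Rat.den_dvd p q
      rwa [Rat.divInt_eq_div, Int.cast_natCast] at this
    exact_mod_cast Int.le_of_dvd (by omega) h1
  have hqD : q * |q * α - p| < 1 / 2 := by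
    have : 2 * (q * |q * α - p|) ≤ (t + ε) * (q * |q * α - p|) := by gcongr; linarith
    linarith
  have hsmall : |α - r| < 1 / (2 * (q : ℝ) ^ 2) := by
    rw [hrα, div_lt_div_iff₀ (by positivity) (by positivity)]
    nlinarith
  obtain ⟨n, hn⟩ := Real.exists_rat_eq_convergent (ξ := α) (q := r) (hsmall.trans_le (by
    have := r.pos
    gcongr))
  have hnn : max n₀ n₁ ≤ n := by
    by_contra! hlt'
    refine hq n (Finset.mem_range.2 hlt') ?_
    rw [← hn]
    refine hsmall.trans_le ?_
    gcongr
    nlinarith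
  obtain ⟨P, Q, hc, hQ, -, hconv, hD, hqual⟩ := convergent_fwd_quality hb n
  have hQ0 : (1 : ℝ) ≤ Q := by exact_mod_cast hQ
  have hQq : (Q : ℝ) ≤ q := by
    have e : r = (P : ℚ) / Q := by rw [hn, hconv]
    rw [hr, div_eq_div_iff (by positivity) (by positivity)] at e
    have e' : p * Q = P * q := by exact_mod_cast e
    have hdvd : (Q : ℤ) ∣ q := by
      refine (Nat.isCoprime_iff_coprime.2 hc).symm.dvd_of_dvd_mul_left ⟨p, ?_⟩
      rw [← e']; ring
    exact_mod_cast Int.le_of_dvd (by omega) hdvd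
  have hPQ : |P - α * Q| = Q * (|q * α - p| / q) := by
    rw [← hrα, hn, hconv, ← abs_of_pos (by positivity : (0 : ℝ) < Q), ← abs_mul,
      abs_of_pos (by positivity : (0 : ℝ) < Q), abs_sub_comm]
    congr 1
    push_cast
    field_simp
  have hle : Q * |P - α * Q| ≤ q * |q * α - p| := by
    rw [hPQ]
    have : Q * (Q * (|q * α - p| / q)) ≤ q * (q * (|q * α - p| / q)) := by gcongr
    refine this.trans (le_of_eq ?_)
    field_simp
  have h1 : 1 / (Q * |P - α * Q|) ≤ t + ε := by
    have h2 := hn₀ (n + 1) (by omega)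
    have h3 : 1 / ((n : ℝ) + 1) ≤ 1 / ((n₁ : ℝ) + 1) := by
      have : (n₁ : ℝ) ≤ n := by exact_mod_cast (le_max_right _ _).trans hnn
      gcongr
    linarith [(abs_le.1 hqual).2]
  rw [div_le_iff₀ (by positivity)] at h1
  have : (t + ε) * (Q * |P - α * Q|) ≤ (t + ε) * (q * |q * α - p|) := by gcongr
  linarith

lemma frequently_le_quality (hb : IsBiDig b) {t : ℝ}
    (h : ∀ ε > 0, ∃ᶠ n : ℕ in Filter.atTop, t - ε ≤ lam b n) {ε : ℝ} (hε : 0 < ε) :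
    ∃ᶠ q : ℕ in Filter.atTop, t - ε ≤ 1 / (q * distNearestInt (q * fwd b 0)) := by
  rw [Filter.frequently_atTop]
  intro q₀
  obtain ⟨n₁, hn₁⟩ := exists_nat_one_div_lt (by positivity : 0 < ε / 2)
  obtain ⟨m, hm, hlam⟩ := Filter.frequently_atTop.1 (h (ε / 2) (by positivity)) (max q₀ n₁ + 1)
  obtain ⟨n, rfl⟩ : ∃ n, m = n + 1 := ⟨m - 1, by omega⟩
  obtain ⟨P, Q, hc, hQ, hnQ, hconv, hD, hqual⟩ := convergent_fwd_quality hb n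
  have hQ0 : (1 : ℝ) ≤ Q := by exact_mod_cast hQ
  refine ⟨Q, by omega, ?_⟩
  have hdist : distNearestInt (Q * fwd b 0) ≤ |P - fwd b 0 * Q| := by
    rw [abs_sub_comm, mul_comm (fwd b 0)]
    exact_mod_cast round_le (Q * fwd b 0) (P : ℤ)
  have hpos : 0 < distNearestInt (Q * fwd b 0) :=
    abs_pos.2 (sub_ne_zero.2 (((irrational_fwd hb).natCast_mul (by omega)).ne_int _))
  have h1 : 1 / (Q * |P - fwd b 0 * Q|) ≤ 1 / (Q * distNearestInt (Q * fwd b 0)) := by gcongr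
  have h3 : 1 / ((n : ℝ) + 1) ≤ 1 / ((n₁ : ℝ) + 1) := by
    have : (n₁ : ℝ) ≤ n := by exact_mod_cast (by omega : n₁ ≤ n)
    gcongr
  linarith [(abs_le.1 hqual).1]

/-- The limit superior of the values of a sequence belongs to the Lagrange spectrum. -/
lemma mem_lagrangeSpectrum (hb : IsBiDig b) {t : ℝ} (ht : 2 ≤ t)
    (h₁ : ∀ ε > 0, ∀ᶠ n : ℕ in Filter.atTop, lam b n ≤ t + ε)
    (h₂ : ∀ ε > 0, ∃ᶠ n : ℕ in Filter.atTop, t - ε ≤ lam b n) : t ∈ LagrangeSpectrum := by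
  have key : lagrangeVal (fwd b 0) = ENNReal.ofReal t := by
    apply le_antisymm
    · refine ENNReal.le_of_forall_pos_le_add fun ε hε _ => ?_
      refine (Filter.limsup_le_of_le (by isBoundedDefault)
        ((eventually_quality_le hb ht h₁ (NNReal.coe_pos.2 hε)).mono
          fun q hq => ENNReal.ofReal_le_ofReal hq)).trans ?_
      rw [ENNReal.ofReal_add (by linarith) ε.coe_nonneg, ENNReal.ofReal_coe_nnreal]
    · refine ENNReal.le_of_forall_pos_le_add fun ε hε _ => ?_
      have := Filter.le_limsup_of_frequently_le
        (f := Filter.atTop) (u := fun q : ℕ => ENNReal.ofReal (1 / (q * distNearestInt (q * fwd b 0))))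
        (a := ENNReal.ofReal (t - ε))
        ((frequently_le_quality hb h₂ (NNReal.coe_pos.2 hε)).mono
          fun q hq => ENNReal.ofReal_le_ofReal hq)
      calc ENNReal.ofReal t = ENNReal.ofReal ((t - ε) + ε) := by rw [sub_add_cancel]
        _ ≤ ENNReal.ofReal (t - ε) + ENNReal.ofReal ε := ENNReal.ofReal_add_le
        _ ≤ _ := by rw [ENNReal.ofReal_coe_nnreal]; gcongr; exact this
  refine ⟨fwd b 0, irrational_fwd hb, by rw [key]; exact ENNReal.ofReal_ne_top, ?_⟩
  rw [key, ENNReal.toReal_ofReal (by linarith)]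

end

lemma lam_shift (a : ℤ → ℕ) (m i : ℤ) : lam (fun j => a (j - m)) i = lam a (i - m) := by
  have h1 : fut (fun j => a (j - m)) i = fut a (i - m) := by
    funext n; simp only [fut]; congr 1; ring
  have h2 : past (fun j => a (j - m)) i = past a (i - m) := by
    funext n; simp only [past]; congr 1; ring
  simp only [lam, h1, h2]

/-- The centres of the blocks of lengths governed by `M` in a concatenation. -/
def blockCentre (M : ℕ → ℕ) : ℕ → ℕ
  | 0 => 0
  | k + 1 => blockCentre M k + M k + M (k + 1) + 2 * (k + 1) + 2

lemma blockCentre_lt (M : ℕ → ℕ) {k k' : ℕ} (h : k < k') :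
    blockCentre M k + M k + M k' + 2 * k' + 2 ≤ blockCentre M k' := by
  induction k', h using Nat.le_induction with
  | base => simp only [blockCentre, Nat.succ_eq_add_one]; omega
  | succ n _ ih => simp only [blockCentre]; omega

open Classical in
/-- The concatenation of the words `e k`, padded by the digit 2. -/
noncomputable def concat (e : ℕ → ℤ → ℕ) (M : ℕ → ℕ) : ℤ → ℕ := fun j =>
  if h : ∃ k, |j - blockCentre M k| < M k then e h.choose (j - blockCentre M h.choose) else 2

section
variable {e : ℕ → ℤ → ℕ} {M : ℕ → ℕ}

lemma IsBiDig.concat (he : ∀ k, IsBiDig (e k)) : IsBiDig (concat e M) := by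
  intro j
  unfold _root_.concat
  split_ifs with h
  · exact he _ _
  · exact Or.inr rfl

lemma concat_of_forall {j : ℤ} (h : ∀ k, (M k : ℤ) ≤ |j - blockCentre M k|) : concat e M j = 2 := by
  have : ¬ ∃ k, |j - blockCentre M k| < M k := fun ⟨k, hk⟩ => (h k).not_gt hk
  simp [concat, this]

lemma concat_of_near (h2 : ∀ k j, (M k : ℤ) ≤ |j| → e k j = 2) {k : ℕ} {j : ℤ}
    (h : |j - blockCentre M k| ≤ M k + k + 1) : concat e M j = e k (j - blockCentre M k) := by
  have huniq : ∀ k', |j - blockCentre M k'| < M k' → k' = k := by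
    intro k' hk'
    rw [abs_lt] at hk'
    rw [abs_le] at h
    by_contra hne
    rcases lt_or_gt_of_ne hne with hlt | hlt
    · have := blockCentre_lt M hlt; omega
    · have := blockCentre_lt M hlt; omega
  by_cases hex : ∃ k, |j - blockCentre M k| < M k
  · have := huniq _ hex.choose_spec
    simp only [concat, hex, dite_true]
    rw [this]
  · rw [concat_of_forall fun k => not_lt.1 fun hk => hex ⟨k, hk⟩,
      h2 _ _ (not_lt.1 fun hk => hex ⟨k, hk⟩)]

lemma abs_lam_concat_sub_le (he : ∀ k, IsBiDig (e k)) (h2 : ∀ k j, (M k : ℤ) ≤ |j| → e k j = 2)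
    {k : ℕ} {n : ℤ} (h : |n - blockCentre M k| ≤ M k + 1) :
    |lam (concat e M) n - lam (e k) (n - blockCentre M k)| ≤ 2 * (3 / 5 : ℝ) ^ k := by
  rw [← lam_shift, two_mul]
  refine abs_lam_sub_le (IsBiDig.concat he) (fun j => he k _) n k k fun j hj1 hj2 => ?_
  refine concat_of_near h2 ?_
  rw [abs_le] at *
  omega

/-- Concatenating finite pieces of bounded value realises `t` as a Lagrange value. -/
lemma mem_lagrangeSpectrum_of_pieces {t : ℝ} (ht : √10 ≤ t) (he : ∀ k, IsBiDig (e k))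
    (h2 : ∀ k j, (M k : ℤ) ≤ |j| → e k j = 2)
    (hle : ∀ k i, lam (e k) i ≤ t + 3 * (3 / 5 : ℝ) ^ k)
    (hge : ∀ k, t - 2 * (3 / 5 : ℝ) ^ k ≤ lam (e k) 0) : t ∈ LagrangeSpectrum := by
  have hb : IsBiDig (concat e M) := IsBiDig.concat he
  have h10 := sqrt_ten_gt
  refine mem_lagrangeSpectrum hb (by linarith) (fun ε hε => ?_) (fun ε hε => ?_)
  · obtain ⟨K, hK⟩ := exists_pow_lt_of_lt_one (by positivity : 0 < ε / 5)
      (by norm_num : (3 / 5 : ℝ) < 1)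
    filter_upwards [Filter.eventually_ge_atTop (blockCentre M K)] with n hn
    by_cases hex : ∃ k, |(n : ℤ) - blockCentre M k| ≤ M k + 1
    · obtain ⟨k, hk⟩ := hex
      have hKk : K ≤ k := by
        by_contra! hlt
        have := blockCentre_lt M hlt
        rw [abs_le] at hk
        omega
      have h3 : (3 / 5 : ℝ) ^ k ≤ (3 / 5 : ℝ) ^ K :=
        pow_le_pow_of_le_one (by norm_num) (by norm_num) hKk
      linarith [(abs_le.1 (abs_lam_concat_sub_le he h2 hk)).2, hle k (n - blockCentre M k)]
    · push Not at hex
      refine (lam_le_of_succ hb (concat_of_forall fun k => ?_)).trans (by linarith)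
      have := hex k
      rw [lt_abs] at this
      rw [le_abs]
      omega
  · rw [Filter.frequently_atTop]
    intro n₀
    obtain ⟨K, hK⟩ := exists_pow_lt_of_lt_one (by positivity : 0 < ε / 4)
      (by norm_num : (3 / 5 : ℝ) < 1)
    have hc : max K n₀ + 1 ≤ blockCentre M (max K n₀ + 1) := by
      have := blockCentre_lt M (Nat.zero_lt_succ (max K n₀))
      rw [Nat.succ_eq_add_one] at this
      omega
    refine ⟨blockCentre M (max K n₀ + 1), by omega, ?_⟩
    have h1 := abs_lam_concat_sub_le he h2 (k := max K n₀ + 1) (M := M)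
      (n := blockCentre M (max K n₀ + 1)) (by simp; positivity)
    rw [sub_self] at h1
    have h3 : (3 / 5 : ℝ) ^ (max K n₀ + 1) ≤ (3 / 5 : ℝ) ^ K :=
      pow_le_pow_of_le_one (by norm_num) (by norm_num) (by omega)
    linarith [(abs_le.1 h1).1, hge (max K n₀ + 1)]

end

lemma exists_piece {a : ℤ → ℕ} (ha : IsBiDig a) {t : ℝ} (h0 : lam a 0 = t) {N : ℕ}
    (h₁ : Connects a t N) (h₂ : Connects (mirror a) t N) :
    ∃ (e : ℤ → ℕ) (M : ℕ), IsBiDig e ∧ (∀ j, (M : ℤ) ≤ |j| → e j = 2) ∧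
      (∀ i, lam e i ≤ t + 3 * (3 / 5 : ℝ) ^ N) ∧ t - 2 * (3 / 5 : ℝ) ^ N ≤ lam e 0 := by
  obtain ⟨c, hc, hca, ⟨R, hR⟩, hcl⟩ := h₁
  obtain ⟨d, hd, hda, ⟨R', hR'⟩, hdl⟩ := h₂
  set e : ℤ → ℕ := fun i => if 0 ≤ i then c i else mirror d i with he
  have hec : ∀ i, -(N : ℤ) ≤ i → e i = c i := by
    intro i hi
    by_cases h : 0 ≤ i
    · simp [he, h]
    · simp only [he, h, if_false, mirror]
      rw [hda _ (by omega), hca _ (by omega), mirror, neg_neg]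
  have hed : ∀ i, i ≤ (N : ℤ) → e i = mirror d i := by
    intro i hi
    by_cases h : 0 ≤ i
    · simp only [he, h, if_true, mirror]
      rw [hda _ (by omega), hca _ (by omega), mirror, neg_neg]
    · simp [he, h]
  have heb : IsBiDig e := by
    intro i
    simp only [he]
    split_ifs
    · exact hc i
    · exact hd.mirror i
  refine ⟨e, max R R', heb, fun j hj => ?_, fun i => ?_, ?_⟩
  · push_cast at hj
    by_cases h : 0 ≤ j
    · simp only [he, h, if_true]
      rw [abs_of_nonneg h] at hj
      exact hR _ (by omega)
    · simp only [he, h, if_false, mirror]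
      rw [abs_of_neg (by omega)] at hj
      exact hR' _ (by omega)
  · by_cases h : 0 ≤ i
    · have := abs_lam_sub_le_left heb hc i N fun j hj => hec j (by omega)
      linarith [(abs_le.1 this).2, hcl i]
    · have := abs_lam_sub_le_right heb hd.mirror i N fun j hj => hed j (by omega)
      have h3 := hdl (-i)
      rw [← lam_mirror] at h3
      linarith [(abs_le.1 this).2]
  · have := abs_lam_sub_le heb ha 0 N N fun j hj hj' => by
      rw [hec j (by omega), hca j (by omega)]
    linarith [(abs_le.1 this).1]

/-- If both half-sequences connect at every scale, the value is in the Lagrange spectrum. -/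
lemma mem_lagrangeSpectrum_of_connects {a : ℤ → ℕ} (ha : IsBiDig a) {t : ℝ} (ht : √10 ≤ t)
    (h0 : lam a 0 = t) (h₁ : ∀ N, Connects a t N) (h₂ : ∀ N, Connects (mirror a) t N) :
    t ∈ LagrangeSpectrum := by
  choose e M he h2 hle hge using fun N => exists_piece ha h0 (h₁ N) (h₂ N)
  exact mem_lagrangeSpectrum_of_pieces ht he h2 hle hge

/-- `|ξ - η|` is at most `t` times the form with roots `ξ`, `η` at every nonzero integer point. -/
def Good (t ξ η : ℝ) : Prop :=
  ∀ p q : ℤ, (p ≠ 0 ∨ q ≠ 0) → |ξ - η| ≤ t * |(p - ξ * q) * (p - η * q)|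

section
variable {t ξ η : ℝ}

lemma Good.ne (h : Good t ξ η) (hne : ξ ≠ η) {p q : ℤ} (hpq : p ≠ 0 ∨ q ≠ 0) :
    (p - ξ * q) * (p - η * q) ≠ 0 := by
  intro h0
  have := h p q hpq
  rw [h0, abs_zero, mul_zero] at this
  exact hne (sub_eq_zero.1 (abs_nonpos_iff.1 this))

lemma Good.abs_sub_le (h : Good t ξ η) : |ξ - η| ≤ t := by
  simpa using h 1 0 (Or.inl one_ne_zero)

lemma Good.symm (h : Good t ξ η) : Good t η ξ := by
  intro p q hpq
  rw [abs_sub_comm, mul_comm ((p : ℝ) - η * q)]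
  exact h p q hpq

/-- The effect of a unimodular change of variables on the difference of the roots. -/
lemma moebius_sub {p q u v : ℤ} (h1 : p - ξ * q ≠ 0) (h2 : p - η * q ≠ 0)
    (hdet : |p * v - q * u| = 1) :
    |(v * ξ - u) / (p - ξ * q) - (v * η - u) / (p - η * q)| =
      |ξ - η| / |(p - ξ * q) * (p - η * q)| := by
  have hdet' : |(p : ℝ) * v - q * u| = 1 := by exact_mod_cast hdet
  rw [div_sub_div _ _ h1 h2, abs_div]
  congr 1
  rw [show (v * ξ - u) * (p - η * q) - (p - ξ * q) * (v * η - u) =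
    ((p : ℝ) * v - q * u) * (ξ - η) by ring, abs_mul, hdet', one_mul]

lemma Good.moebius (h : Good t ξ η) (hne : ξ ≠ η) {p q u v : ℤ} (hdet : |p * v - q * u| = 1) :
    Good t ((v * ξ - u) / (p - ξ * q)) ((v * η - u) / (p - η * q)) := by
  have hpq : p ≠ 0 ∨ q ≠ 0 := by
    by_contra! h0
    rw [h0.1, h0.2] at hdet
    simp at hdet
  have hF := h.ne hne hpq
  have h1 := left_ne_zero_of_mul hF
  have h2 := right_ne_zero_of_mul hF
  intro r s hrs
  have hne' : r * p + s * u ≠ 0 ∨ r * q + s * v ≠ 0 := by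
    by_contra! h0
    have e1 : r * (p * v - q * u) = 0 := by linear_combination v * h0.1 - u * h0.2
    have e2 : s * (p * v - q * u) = 0 := by linear_combination p * h0.2 - q * h0.1
    have hd : p * v - q * u ≠ 0 := by
      intro h0; rw [h0] at hdet; simp at hdet
    rcases hrs with h | h
    · exact h ((mul_eq_zero.1 e1).resolve_right hd)
    · exact h ((mul_eq_zero.1 e2).resolve_right hd)
  have key := h _ _ hne'
  rw [moebius_sub h1 h2 hdet]
  have e : ∀ x : ℝ, p - x * q ≠ 0 → r - (v * x - u) / (p - x * q) * s =
      (((r * p + s * u : ℤ) : ℝ) - x * (r * q + s * v : ℤ)) / (p - x * q) := by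
    intro x hx
    rw [eq_div_iff hx, sub_mul, mul_right_comm, div_mul_cancel₀ _ hx]
    push_cast
    ring
  rw [e _ h1, e _ h2, div_mul_div_comm, abs_div, ← mul_div_assoc]
  exact div_le_div_of_nonneg_right key (abs_nonneg _)

/-- Reduced pairs of roots. -/
def Red (t : ℝ) (s : ℝ × ℝ) : Prop := Good t s.1 s.2 ∧ 1 < s.1 ∧ -1 < s.2 ∧ s.2 < 0

/-- Removal of the first partial quotient. -/
noncomputable def gaussStep (s : ℝ × ℝ) : ℝ × ℝ := (1 / (s.1 - ⌊s.1⌋₊), 1 / (s.2 - ⌊s.1⌋₊))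

/-- Exchange of future and past. -/
noncomputable def reflect (s : ℝ × ℝ) : ℝ × ℝ := (-1 / s.2, -1 / s.1)

lemma reflect_reflect (s : ℝ × ℝ) : reflect (reflect s) = s := by
  ext <;> simp [reflect, neg_div]

variable {s : ℝ × ℝ}

lemma Red.sub_le (h : Red t s) : s.1 - s.2 ≤ t := (le_abs_self _).trans h.1.abs_sub_le

lemma Red.ne (h : Red t s) : s.1 ≠ s.2 := by
  obtain ⟨-, h1, -, h3⟩ := h
  intro h; linarith

lemma Red.swap (h : Red t s) : Red t (reflect s) := by
  have hne := h.ne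
  obtain ⟨hg, h1, h2, h3⟩ := h
  refine ⟨?_, ?_, ?_, ?_⟩
  · have := (hg.moebius hne (p := 0) (q := -1) (u := 1) (v := 0) (by simp)).symm
    simpa [reflect] using this
  · show 1 < -1 / s.2
    rw [lt_div_iff_of_neg h3]; linarith
  · show -1 < -1 / s.1
    rw [lt_div_iff₀ (by linarith)]; linarith
  · show -1 / s.1 < 0
    exact div_neg_of_neg_of_pos (by norm_num) (by linarith)

lemma Red.fst_lt_three (ht : t ≤ √12) (h : Red t s) : s.1 < 3 := by
  have hst := h.sub_le
  obtain ⟨hg, h1, h2, h3⟩ := h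
  by_contra! hx
  have h01 := hg 0 1 (Or.inr one_ne_zero)
  have h31 := hg 3 1 (Or.inr one_ne_zero)
  generalize s.1 = ξ at *
  generalize s.2 = η at *
  have ht0 : 0 < t := by linarith
  have hpos : 0 < ξ - η := by linarith
  rw [abs_of_pos hpos] at h01 h31
  push_cast at h01 h31
  rw [show (0 - ξ * 1) * (0 - η * 1) = -(ξ * -η) by ring, abs_neg, abs_of_pos (by nlinarith)] at h01
  rw [show (3 - ξ * 1) * (3 - η * 1) = -((ξ - 3) * (3 - η)) by ring, abs_neg,
    abs_of_nonneg (mul_nonneg (by linarith) (by linarith))] at h31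
  have e1 : 1 ≤ t * -η := by
    by_contra! hlt
    have : t * (ξ * -η) < ξ * 1 := by
      rw [show t * (ξ * -η) = ξ * (t * -η) by ring]; gcongr
    linarith
  have e2 : 1 ≤ t * (ξ - 3) := by
    by_contra! hlt
    have : t * ((ξ - 3) * (3 - η)) < (3 - η) * 1 := by
      rw [show t * ((ξ - 3) * (3 - η)) = (3 - η) * (t * (ξ - 3)) by ring]
      have : 0 < 3 - η := by linarith
      gcongr
    linarith
  have e3 : t * t ≤ 12 := by
    have := Real.mul_self_sqrt (by norm_num : (0 : ℝ) ≤ 12)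
    nlinarith [Real.sqrt_nonneg 12]
  have e4 : 3 * t + 2 ≤ t * t := by nlinarith
  nlinarith

lemma Red.floor (ht : t ≤ √12) (h : Red t s) : ⌊s.1⌋₊ = 1 ∨ ⌊s.1⌋₊ = 2 := by
  have h1 : ⌊s.1⌋₊ < 3 := by
    rw [Nat.floor_lt (by linarith [h.2.1])]
    exact_mod_cast h.fst_lt_three ht
  have h2 : 1 ≤ ⌊s.1⌋₊ := (Nat.one_le_floor_iff _).2 h.2.1.le
  omega

lemma Red.step (h : Red t s) : Red t (gaussStep s) := by
  have hne := h.ne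
  obtain ⟨hg, h1, h2, h3⟩ := h
  have hf0 : (⌊s.1⌋₊ : ℝ) ≤ s.1 := Nat.floor_le (by linarith)
  have hf1 : s.1 < ⌊s.1⌋₊ + 1 := Nat.lt_floor_add_one _
  have hf2 : (1 : ℝ) ≤ ⌊s.1⌋₊ := by exact_mod_cast (Nat.one_le_floor_iff _).2 h1.le
  have hne' : s.1 ≠ ⌊s.1⌋₊ := by
    have := left_ne_zero_of_mul (hg.ne hne (p := ⌊s.1⌋₊) (q := 1) (Or.inr one_ne_zero))
    intro h; apply this; push_cast; linarith
  have hf3 : 0 < s.1 - ⌊s.1⌋₊ := sub_pos.2 (lt_of_le_of_ne hf0 hne'.symm)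
  refine ⟨?_, ?_, ?_, ?_⟩
  · have := hg.moebius hne (p := -⌊s.1⌋₊) (q := -1) (u := -1) (v := 0) (by simp)
    simp only [gaussStep]
    convert this using 2 <;> push_cast <;> ring
  · show 1 < 1 / (s.1 - ⌊s.1⌋₊)
    rw [lt_div_iff₀ hf3]; linarith
  · show -1 < 1 / (s.2 - ⌊s.1⌋₊)
    rw [lt_div_iff_of_neg (by linarith)]; linarith
  · show 1 / (s.2 - ⌊s.1⌋₊) < 0
    exact div_neg_of_pos_of_neg one_pos (by linarith)

/-- The partial quotients of a reduced pair. -/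
noncomputable def digits (s : ℝ × ℝ) (n : ℕ) : ℕ := ⌊(gaussStep^[n] s).1⌋₊

lemma digits_add (s : ℝ × ℝ) (n k : ℕ) : digits (gaussStep^[n] s) k = digits s (n + k) := by
  rw [digits, digits, add_comm n, Function.iterate_add_apply]

lemma Red.iterate (h : Red t s) (n : ℕ) : Red t (gaussStep^[n] s) := by
  induction n with
  | zero => exact h
  | succ n ih => rw [Function.iterate_succ_apply']; exact ih.step

lemma Red.isDig_digits (ht : t ≤ √12) (h : Red t s) : IsDig (digits s) :=
  fun n => (h.iterate n).floor ht

lemma fst_eq_floor_add (s : ℝ × ℝ) : s.1 = ⌊s.1⌋₊ + 1 / (gaussStep s).1 := by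
  simp [gaussStep]

lemma Red.fst_eq (ht : t ≤ √12) (h : Red t s) :
    s.1 = digits s 0 + cf (fun k => digits s (k + 1)) := by
  have hdig := h.isDig_digits ht
  have hz : 1 / (gaussStep^[0 + 1] s).1 = cf (fun k => digits s (k + 1)) := by
    refine eq_cf_of_recurrence (z := fun n => 1 / (gaussStep^[n + 1] s).1)
      (fun k => hdig (k + 1)) (fun n => ?_) (fun n => ?_) fun n => ?_
    · have := (h.iterate (n + 1)).2.1
      positivity
    · have := (h.iterate (n + 1)).2.1
      rw [div_le_one (by linarith)]; exact this.le
    · have := fst_eq_floor_add (gaussStep^[n + 1] s)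
      rw [← Function.iterate_succ_apply' gaussStep] at this
      exact congrArg (fun x => 1 / x) this
  rw [← hz]
  exact fst_eq_floor_add s

/-- The bi-infinite sequence with future `f` and past `g`. -/
def biSeq (f g : ℕ → ℕ) : ℤ → ℕ
  | Int.ofNat n => f n
  | Int.negSucc n => g n

lemma biSeq_reverse (f g : ℕ → ℕ) (i : ℤ) : biSeq f g (-1 - i) = biSeq g f i := by
  obtain ⟨n, rfl | rfl⟩ : ∃ n : ℕ, i = n ∨ i = -1 - n := by
    rcases le_or_gt 0 i with h | h
    · exact ⟨i.toNat, Or.inl (by omega)⟩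
    · exact ⟨(-1 - i).toNat, Or.inr (by omega)⟩
  · rw [show (-1 - (n : ℤ)) = Int.negSucc n by omega]; rfl
  · rw [show (-1 - (n : ℤ)) = Int.negSucc n by omega,
      show (-1 - Int.negSucc n) = (n : ℤ) by omega]
    rfl

lemma lam_reverse (a : ℤ → ℕ) (i : ℤ) : lam (fun j => a (-1 - j)) i = lam a (-1 - i) := by
  have h1 : fut (fun j => a (-1 - j)) i = past a (-1 - i) := by
    funext n; simp only [fut, past]; congr 1; ring
  have h2 : past (fun j => a (-1 - j)) i = fut a (-1 - i) := by
    funext n; simp only [fut, past]; congr 1; ring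
  simp only [lam, h1, h2]; ring

/-- The bi-infinite sequence of partial quotients of a reduced pair. -/
noncomputable def codes (s : ℝ × ℝ) : ℤ → ℕ := biSeq (digits s) (digits (reflect s))

lemma Red.isBiDig_codes (ht : t ≤ √12) (h : Red t s) : IsBiDig (codes s)
  | Int.ofNat n => h.isDig_digits ht n
  | Int.negSucc n => h.swap.isDig_digits ht n

lemma Red.cf_past_codes (ht : t ≤ √12) (h : Red t s) (n : ℕ) :
    cf (past (codes s) n) = -(gaussStep^[n] s).2 := by
  induction n with
  | zero =>
    have e : past (codes s) (0 : ℕ) = digits (reflect s) := by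
      funext k
      show codes s ((0 : ℕ) - 1 - k) = _
      rw [show (((0 : ℕ) : ℤ) - 1 - k) = -1 - (k : ℤ) by push_cast; ring, codes, biSeq_reverse]
      rfl
    rw [e, cf_eq (h.swap.isDig_digits ht), ← h.swap.fst_eq ht]
    simp [reflect, neg_div]
  | succ n ih =>
    push_cast
    rw [cf_past (h.isBiDig_codes ht), ih, Function.iterate_succ_apply']
    show 1 / ((digits s n : ℝ) + _) = -(1 / ((gaussStep^[n] s).2 - digits s n))
    rw [← one_div_neg_eq_neg_one_div]
    congr 1; ring

lemma Red.lam_codes (ht : t ≤ √12) (h : Red t s) (n : ℕ) :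
    lam (codes s) n = (gaussStep^[n] s).1 - (gaussStep^[n] s).2 := by
  have e : fut (codes s) n = fun k => digits (gaussStep^[n] s) (k + 1) := by
    funext k
    rw [digits_add]
    show codes s (n + 1 + k) = _
    rw [show ((n : ℤ) + 1 + k) = ((n + (k + 1) : ℕ) : ℤ) by push_cast; ring]
    rfl
  rw [lam, h.cf_past_codes ht, e, sub_eq_add_neg, (h.iterate n).fst_eq ht, digits_add]
  rfl

lemma Red.lam_codes_le (ht : t ≤ √12) (h : Red t s) (i : ℤ) : lam (codes s) i ≤ t := by
  obtain ⟨n, rfl | rfl⟩ : ∃ n : ℕ, i = n ∨ i = -1 - n := by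
    rcases le_or_gt 0 i with h | h
    · exact ⟨i.toNat, Or.inl (by omega)⟩
    · exact ⟨(-1 - i).toNat, Or.inr (by omega)⟩
  · rw [h.lam_codes ht]; exact (h.iterate n).sub_le
  · have e : codes s = fun j => codes (reflect s) (-1 - j) := by
      funext j
      rw [codes, codes, reflect_reflect, biSeq_reverse]
    rw [e, lam_reverse, show (-1 - (-1 - (n : ℤ))) = n by ring, h.swap.lam_codes ht]
    exact (h.swap.iterate n).sub_le

end

section
variable {t ξ η : ℝ}

lemma Good.add_int (h : Good t ξ η) (m : ℤ) : Good t (ξ + m) (η + m) := by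
  intro p q hpq
  have := h (p - m * q) q (by
    by_contra! h0
    obtain ⟨h1, rfl⟩ := h0
    simp at h1 hpq
    exact hpq h1)
  push_cast at this
  rw [add_sub_add_right_eq_sub]
  refine this.trans (le_of_eq ?_)
  congr 2; ring

lemma exists_good_of_mem_markovSpectrum (ht : t ∈ MarkovSpectrum) (ht2 : 2 ≤ t) :
    ∃ ξ η : ℝ, ξ ≠ η ∧ Good t ξ η ∧ ∀ ε > 0, ε ≤ 1 → ∃ p q : ℤ, (p ≠ 0 ∨ q ≠ 0) ∧
      (t - ε) * |(p - ξ * q) * (p - η * q)| ≤ |ξ - η| := by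
  obtain ⟨A, B, C, hΔ, hfin, rfl⟩ := ht
  set D := √(B ^ 2 - 4 * A * C) with hD
  have hD0 : 0 < D := Real.sqrt_pos.2 hΔ
  have hDD : D * D = B ^ 2 - 4 * A * C := Real.mul_self_sqrt hΔ.le
  set T := (markovVal A B C).toReal with hT
  have hTv : markovVal A B C = ENNReal.ofReal T := (ENNReal.ofReal_toReal hfin).symm
  have hle : ∀ p q : ℤ, (p ≠ 0 ∨ q ≠ 0) →
      0 < |A * (p : ℝ) ^ 2 + B * p * q + C * (q : ℝ) ^ 2| ∧
      D ≤ T * |A * (p : ℝ) ^ 2 + B * p * q + C * (q : ℝ) ^ 2| := by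
    intro p q hpq
    have h1 : ENNReal.ofReal D / ENNReal.ofReal |A * (p : ℝ) ^ 2 + B * p * q + C * (q : ℝ) ^ 2| ≤
        ENNReal.ofReal T := by
      rw [← hTv]
      exact le_iSup₂_of_le (p, q) (by simpa [Prod.ext_iff, imp_iff_not_or] using hpq) le_rfl
    have h0 : 0 < |A * (p : ℝ) ^ 2 + B * p * q + C * (q : ℝ) ^ 2| := by
      rcases (abs_nonneg (A * (p : ℝ) ^ 2 + B * p * q + C * (q : ℝ) ^ 2)).lt_or_eq with h | h
      · exact h
      · rw [← h, ENNReal.ofReal_zero, ENNReal.div_zero (by simpa using hD0)] at h1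
        exact absurd (top_le_iff.1 h1) ENNReal.ofReal_ne_top
    refine ⟨h0, ?_⟩
    rwa [← ENNReal.ofReal_div_of_pos h0, ENNReal.ofReal_le_ofReal_iff (by linarith),
      div_le_iff₀ h0] at h1
  have hA : 0 < |A| := by simpa using (hle 1 0 (Or.inl one_ne_zero)).1
  have hA0 : A ≠ 0 := abs_pos.1 hA
  have hdiff : |(-B + D) / (2 * A) - (-B - D) / (2 * A)| = D / |A| := by
    rw [← sub_div, show (-B + D) - (-B - D) = 2 * D by ring, mul_div_mul_left _ _ two_ne_zero,
      abs_div, abs_of_pos hD0]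
  have hform : ∀ p q : ℤ, |(p - (-B + D) / (2 * A) * q) * (p - (-B - D) / (2 * A) * q)| =
      |A * (p : ℝ) ^ 2 + B * p * q + C * (q : ℝ) ^ 2| / |A| := by
    intro p q
    rw [← abs_div]
    congr 1
    field_simp
    linear_combination -(q : ℝ) ^ 2 * hDD
  refine ⟨(-B + D) / (2 * A), (-B - D) / (2 * A), ?_, ?_, ?_⟩
  · intro h
    rw [h, sub_self, abs_zero] at hdiff
    have : 0 < D / |A| := by positivity
    linarith
  · intro p q hpq
    rw [hdiff, hform, ← mul_div_assoc]
    exact div_le_div_of_nonneg_right (hle p q hpq).2 hA.le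
  · intro ε hε hε1
    have hlt : ENNReal.ofReal (T - ε) < markovVal A B C := by
      rw [hTv]; exact (ENNReal.ofReal_lt_ofReal_iff (by linarith)).2 (by linarith)
    obtain ⟨⟨p, q⟩, hlt'⟩ := lt_iSup_iff.1 hlt
    obtain ⟨hpq, h⟩ := lt_iSup_iff.1 hlt'
    have hpq' : p ≠ 0 ∨ q ≠ 0 := by simpa [Prod.ext_iff, imp_iff_not_or] using hpq
    refine ⟨p, q, hpq', ?_⟩
    rw [hdiff, hform, ← mul_div_assoc]
    refine div_le_div_of_nonneg_right ?_ hA.le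
    have h0 := (hle p q hpq').1
    simp only at h
    rw [← ENNReal.ofReal_div_of_pos h0] at h
    exact ((lt_div_iff₀ h0).1 (ENNReal.ofReal_lt_ofReal_iff_of_nonneg (by linarith) |>.1 h)).le

lemma exists_good_near (hg : Good t ξ η) (hne : ξ ≠ η) {ε : ℝ} (hε : ε ≤ t) {p q : ℤ}
    (hpq : p ≠ 0 ∨ q ≠ 0) (h : (t - ε) * |(p - ξ * q) * (p - η * q)| ≤ |ξ - η|) :
    ∃ ξ' η' : ℝ, Good t ξ' η' ∧ η' ∈ Set.Icc (-1 : ℝ) 0 ∧ t - ε ≤ ξ' - η' ∧ ξ' - η' ≤ t := by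
  obtain ⟨p', q', hco, hp, hq⟩ := Int.exists_gcd_one (m := p) (n := q) (Int.gcd_pos_iff.2 hpq)
  have hg1 : (1 : ℝ) ≤ (p.gcd q : ℕ) := by exact_mod_cast Int.gcd_pos_iff.2 hpq
  generalize p.gcd q = g at hp hq hg1
  have h' : (t - ε) * |(p' - ξ * q') * (p' - η * q')| ≤ |ξ - η| := by
    refine le_trans ?_ h
    have hε' : 0 ≤ t - ε := by linarith
    refine mul_le_mul_of_nonneg_left ?_ hε'
    rw [hp, hq]
    push_cast
    rw [show (p' * (g : ℝ) - ξ * (q' * g)) * (p' * g - η * (q' * g)) =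
      (g : ℝ) ^ 2 * ((p' - ξ * q') * (p' - η * q')) by ring, abs_mul ((g : ℝ) ^ 2),
      abs_of_pos (by positivity : 0 < (g : ℝ) ^ 2)]
    exact le_mul_of_one_le_left (abs_nonneg _) (one_le_pow₀ hg1)
  obtain ⟨v, u, huv⟩ := Int.isCoprime_iff_gcd_eq_one.2 hco
  have hdet : |p' * v - q' * (-u)| = 1 := by
    rw [show p' * v - q' * (-u) = 1 by linear_combination huv, abs_one]
  have hpq' : p' ≠ 0 ∨ q' ≠ 0 := by
    by_contra! h0; rw [h0.1, h0.2] at huv; simp at huv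
  have hF := hg.ne hne hpq'
  have hgood := hg.moebius hne hdet
  have hsub := moebius_sub (left_ne_zero_of_mul hF) (right_ne_zero_of_mul hF) hdet
  have hlow : t - ε ≤ |ξ - η| / |(p' - ξ * q') * (p' - η * q')| :=
    (le_div_iff₀ (abs_pos.2 hF)).2 h'
  rw [← hsub] at hlow
  generalize ((v : ℝ) * ξ - (-u : ℤ)) / (p' - ξ * q') = x at *
  generalize ((v : ℝ) * η - (-u : ℤ)) / (p' - η * q') = y at *
  wlog hxy : y ≤ x generalizing x y
  · exact this y x hgood.symm (by rwa [abs_sub_comm]) (by rwa [abs_sub_comm])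
      (le_of_not_ge hxy)
  rw [abs_of_nonneg (sub_nonneg.2 hxy)] at hlow
  have hup := (le_abs_self _).trans hgood.abs_sub_le
  refine ⟨x + (-⌈y⌉ : ℤ), y + (-⌈y⌉ : ℤ), hgood.add_int _, ⟨?_, ?_⟩, by linarith, by linarith⟩
  · push_cast; linarith [Int.ceil_lt_add_one y]
  · push_cast; linarith [Int.le_ceil y]

/-- Every Markov value is the exact difference of a reduced pair of roots. -/
lemma exists_red_of_mem_markovSpectrum (ht : t ∈ MarkovSpectrum) (ht2 : 2 ≤ t) :
    ∃ s : ℝ × ℝ, Red t s ∧ s.1 - s.2 = t := by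
  obtain ⟨ξ, η, hne, hg, happ⟩ := exists_good_of_mem_markovSpectrum ht ht2
  have hex : ∀ n : ℕ, ∃ s : ℝ × ℝ, Good t s.1 s.2 ∧ s.2 ∈ Set.Icc (-1 : ℝ) 0 ∧
      t - 1 / ((n : ℝ) + 1) ≤ s.1 - s.2 ∧ s.1 - s.2 ≤ t := by
    intro n
    have h1 : 1 / ((n : ℝ) + 1) ≤ 1 := by
      rw [div_le_one (by positivity)]; linarith [(n.cast_nonneg : (0 : ℝ) ≤ n)]
    obtain ⟨p, q, hpq, h⟩ := happ (1 / ((n : ℝ) + 1)) (by positivity) h1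
    obtain ⟨x, y, h⟩ := exists_good_near hg hne (by linarith) hpq h
    exact ⟨(x, y), h⟩
  choose s hs1 hs2 hs3 hs4 using hex
  have hmem : ∀ n, s n ∈ Set.Icc (-1 : ℝ) t ×ˢ Set.Icc (-1 : ℝ) 0 := by
    intro n
    have h1 := hs2 n
    have h2 : 1 / ((n : ℝ) + 1) ≤ 1 := by
      rw [div_le_one (by positivity)]; linarith [(n.cast_nonneg : (0 : ℝ) ≤ n)]
    exact ⟨⟨by linarith [h1.1, hs3 n], by linarith [h1.2, hs4 n]⟩, h1⟩
  obtain ⟨x, hx, φ, hφ, hlim⟩ := (isCompact_Icc.prod isCompact_Icc).tendsto_subseq hmem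
  have hl1 := (continuous_fst.tendsto x).comp hlim
  have hl2 := (continuous_snd.tendsto x).comp hlim
  have hxt : x.1 - x.2 = t := by
    refine tendsto_nhds_unique (hl1.sub hl2) ?_
    refine tendsto_of_tendsto_of_tendsto_of_le_of_le (h := fun _ => t)
      (g := fun n => t - 1 / ((φ n : ℝ) + 1)) ?_ tendsto_const_nhds
      (fun n => hs3 (φ n)) (fun n => hs4 (φ n))
    have := (tendsto_one_div_add_atTop_nhds_zero_nat (𝕜 := ℝ)).comp hφ.tendsto_atTop
    simpa using tendsto_const_nhds (x := t).sub this
  have hgood : Good t x.1 x.2 := by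
    intro p q hpq
    refine le_of_tendsto_of_tendsto' (hl1.sub hl2).abs
      (((tendsto_const_nhds (x := (p : ℝ)).sub (hl1.mul_const (q : ℝ))).mul
        (tendsto_const_nhds (x := (p : ℝ)).sub (hl2.mul_const (q : ℝ)))).abs.const_mul t)
      fun n => hs1 (φ n) p q hpq
  have hxne : x.1 ≠ x.2 := fun h => by rw [h, sub_self] at hxt; linarith
  have h0 : x.2 ≠ 0 := by
    have := right_ne_zero_of_mul (hgood.ne hxne (p := 0) (q := 1) (Or.inr one_ne_zero))
    simpa using this
  have h1 : x.2 ≠ -1 := by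
    have := right_ne_zero_of_mul (hgood.ne hxne (p := -1) (q := 1) (Or.inr one_ne_zero))
    intro h; apply this; rw [h]; norm_num
  have h2 : -1 < x.2 := lt_of_le_of_ne hx.2.1 h1.symm
  exact ⟨x, ⟨hgood, by linarith, h2, lt_of_le_of_ne hx.2.2 h0⟩, hxt⟩

/-- Markov values up to `√12` are attained maxima of values of sequences of ones and twos. -/
lemma exists_biDig_of_mem_markovSpectrum (ht : t ∈ MarkovSpectrum) (ht2 : 2 ≤ t)
    (ht12 : t ≤ √12) : ∃ a, IsBiDig a ∧ lam a 0 = t ∧ ∀ i, lam a i ≤ t := by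
  obtain ⟨s, hs, hst⟩ := exists_red_of_mem_markovSpectrum ht ht2
  refine ⟨codes s, hs.isBiDig_codes ht12, ?_, hs.lam_codes_le ht12⟩
  have := hs.lam_codes ht12 0
  simpa [hst] using this

end

/-- Values of sequences that fail to connect at scale `N`, with prescribed approximate value and
prescribed central word. -/
def obstructed (N : ℕ) (j : ℤ) (w : Fin (2 * N + 1) → ℕ) : Set (ℤ → ℕ) :=
  {a | IsBiDig a ∧ √10 ≤ lam a 0 ∧ (∀ i, lam a i ≤ lam a 0) ∧ ¬ Connects a (lam a 0) N ∧
    ⌊lam a 0 / (3 / 5 : ℝ) ^ N⌋ = j ∧ ∀ k : Fin (2 * N + 1), a (k - N) = w k}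

lemma forcedBranching_obstructed (N : ℕ) (j : ℤ) (w : Fin (2 * N + 1) → ℕ) :
    ForcedBranching ((fun a => fut a 0) '' obstructed N j w) := by
  rintro _ ⟨a, ⟨ha, ht, hat, hna, hj, hw⟩, rfl⟩ _ ⟨a', ⟨ha', -, hat', -, hj', hw'⟩, rfl⟩ n hpre h1 h2
  have hwin : ∀ i : ℤ, -N ≤ i → i ≤ N → a i = a' i := by
    intro i hi hi'
    have e : ((⟨(i + N).toNat, by omega⟩ : Fin (2 * N + 1)) : ℕ) - (N : ℤ) = i := by
      simp only; omega
    rw [← e, hw, hw']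
  simp only [fut] at hpre h1 h2
  have hn : N ≤ n := by
    by_contra! hlt
    have := hwin (0 + 1 + n) (by omega) (by omega)
    omega
  have hagree : ∀ i : ℤ, -N ≤ i → i ≤ n → a i = a' i := by
    intro i hi hi'
    by_cases hiN : i ≤ N
    · exact hwin i hi hiN
    · have := hpre (i - 1).toNat (by omega)
      rwa [show (0 : ℤ) + 1 + (i - 1).toNat = i by omega] at this
  have htt : lam a' 0 ≤ lam a 0 + (3 / 5 : ℝ) ^ N := by
    have hk : (0 : ℝ) < (3 / 5 : ℝ) ^ N := by positivity
    have f1 := Int.floor_le (lam a 0 / (3 / 5 : ℝ) ^ N)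
    have f2 := Int.lt_floor_add_one (lam a' 0 / (3 / 5 : ℝ) ^ N)
    rw [hj, le_div_iff₀ hk] at f1
    rw [hj', div_lt_iff₀ hk] at f2
    linarith
  have key := forced_of_branch ha ha' ht htt hat hat' hna hn hagree
    (by rw [← h1]; simp only [fut]; congr 1; push_cast; ring)
    (by rw [← h2]; simp only [fut]; congr 1; push_cast; ring)
  have e : ∀ (b : ℤ → ℕ) (m : ℕ), fut b n m = fut b 0 (n + m) := by
    intro b m; simp only [fut]; congr 1; push_cast; ring
  simpa only [e] using key

lemma dimH_lam_obstructed_le (N : ℕ) (j : ℤ) (w : Fin (2 * N + 1) → ℕ) :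
    dimH ((fun a => lam a 0) '' obstructed N j w) ≤ ((3 / 20 + 5 / 9 : ℝ≥0) : ℝ≥0∞) := by
  have h1 := hasBoxBound_of_forcedBranching (K := (fun a => fut a 0) '' obstructed N j w)
    (by rintro _ ⟨a, ha, rfl⟩; exact ha.1.fut 0) (forcedBranching_obstructed N j w)
  have h2 := h1.add hasBoxBound_all (w ⟨N, by omega⟩ : ℝ)
  apply HasBoxBound.dimH_le
  have e : ((3 / 20 + 5 / 9 : ℝ≥0) : ℝ) = ((3 : ℕ) : ℝ) / (20 : ℕ) + ((5 : ℕ) : ℝ) / (9 : ℕ) := by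
    push_cast; rfl
  rw [e]
  refine h2.mono ?_
  rintro _ ⟨a, ha, rfl⟩
  refine ⟨_, ⟨_, ⟨a, ha, rfl⟩, rfl⟩, _, ⟨past a 0, ha.1.past 0, rfl⟩, ?_⟩
  have := ha.2.2.2.2.2 ⟨N, by omega⟩
  simp only [sub_self] at this
  rw [← this]
  rfl

lemma diff_subset_iUnion_obstructed :
    (MarkovSpectrum \ LagrangeSpectrum) ∩ Set.Icc √10 √12 ⊆
      ⋃ (N : ℕ) (j : ℤ) (w : Fin (2 * N + 1) → ℕ), (fun a => lam a 0) '' obstructed N j w := by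
  rintro t ⟨⟨hM, hL⟩, ht, ht12⟩
  have h10 := sqrt_ten_gt
  obtain ⟨a, ha, h0, hle⟩ := exists_biDig_of_mem_markovSpectrum hM (by linarith) ht12
  have hmem : ∀ (b : ℤ → ℕ) (N : ℕ), IsBiDig b → lam b 0 = t → (∀ i, lam b i ≤ t) →
      ¬ Connects b t N → t ∈ ⋃ (N : ℕ) (j : ℤ) (w : Fin (2 * N + 1) → ℕ),
        (fun a => lam a 0) '' obstructed N j w := by
    rintro b N hb rfl hble hbc
    simp only [Set.mem_iUnion]
    exact ⟨N, _, _, b, ⟨hb, ht, hble, hbc, rfl, fun k => rfl⟩, rfl⟩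
  by_contra hnot
  refine hL (mem_lagrangeSpectrum_of_connects ha ht h0 (fun N => ?_) fun N => ?_)
  · by_contra hN
    exact hnot (hmem a N ha h0 hle hN)
  · by_contra hN
    exact hnot (hmem (mirror a) N ha.mirror (by rw [lam_mirror, neg_zero, h0])
      (fun i => by rw [lam_mirror]; exact hle _) hN)

/-- `dimH((M ∖ L) ∩ [√10, √12]) < 0.706094`; in particular it is less than `0.93`. -/
theorem dimH_M_diff_L_middle_bound :
    dimH ((MarkovSpectrum \ LagrangeSpectrum) ∩ Set.Icc (Real.sqrt 10) (Real.sqrt 12)) <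
      ENNReal.ofReal 0.706094 ∧
    dimH ((MarkovSpectrum \ LagrangeSpectrum) ∩ Set.Icc (Real.sqrt 10) (Real.sqrt 12)) <
      ENNReal.ofReal 0.93 := by
  have h : dimH ((MarkovSpectrum \ LagrangeSpectrum) ∩ Set.Icc (Real.sqrt 10) (Real.sqrt 12)) ≤
      ((3 / 20 + 5 / 9 : ℝ≥0) : ℝ≥0∞) := by
    refine (dimH_mono diff_subset_iUnion_obstructed).trans ?_
    simp only [dimH_iUnion, iSup_le_iff]
    exact dimH_lam_obstructed_le
  have e : ((3 / 20 + 5 / 9 : ℝ≥0) : ℝ≥0∞) = ENNReal.ofReal (3 / 20 + 5 / 9) := by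
    rw [← ENNReal.ofReal_coe_nnreal]; push_cast; rfl
  rw [e] at h
  exact ⟨h.trans_lt ((ENNReal.ofReal_lt_ofReal_iff (by norm_num)).2 (by norm_num)),
    h.trans_lt ((ENNReal.ofReal_lt_ofReal_iff (by norm_num)).2 (by norm_num))⟩
end
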